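/- arXiv:2012.08411 — 5 statements merged into one kernel-verified Lean document; each statement's English description precedes it below -/
import Mathlib

section
/- For nonnegative integers a ≥ d ≥ b ≥ c and any q, the identity Σ_s [a−b choose b−s]_q [b−c choose s−c]_q [a−2b+s choose d−2b+s]_q q^{(b−s)^2} = [a−b choose d−b]_q [d−c choose b−c]_q holds, where the sum is over all integers s (only finitely many terms are nonzero). -/
/-- Gaussian binomial coefficient `[n choose k]_q`. -/
def gaussNat (q : ℕ) : ℕ → ℕ → ℕ
  | _, 0 => 1
  | 0, _ + 1 => 0
  | n + 1, k + 1 => gaussNat q n k + q ^ (k + 1) * gaussNat q n (k + 1)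

/-- Gaussian binomial coefficient `[n choose k]_q` with integer arguments; it is `0`
unless `0 ≤ k ≤ n`. -/
def gaussZ (q : ℕ) (n k : ℤ) : ℕ :=
  if 0 ≤ k ∧ k ≤ n then gaussNat q n.toNat k.toNat else 0

/-!
In terms of `n = a - b`, `k = d - b`, `m = b - c` and `t = b - s`, trinomial revision
`[n, t] [n - t, k - t] = [n, k] [k, t]` pulls the factor `[n, k]` out of the sum, and what is left,
`∑ₜ [m, m - t] [k, t] q ^ t² = [m + k, m]`, is a case of the `q`-Vandermonde identity.
Both identities follow from the `q`-Pascal rule alone, without dividing by `q`-factorials, so `q`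
may lie in any commutative semiring.
-/

open Finset

theorem finsum_int_eq_sum_range {M : Type*} [AddCommMonoid M] {f : ℤ → M} {n : ℕ}
    (hf : ∀ t, f t ≠ 0 → 0 ≤ t ∧ t < n) : ∑ᶠ t, f t = ∑ j ∈ range n, f j := by
  rw [finsum_eq_sum_of_support_subset (s := (range n).map Nat.castEmbedding), sum_map]
  · rfl
  · intro t ht
    obtain ⟨h0, hn⟩ := hf t ht
    lift t to ℕ using h0
    simpa using hn

section GaussBinom

variable {R : Type*} [CommSemiring R] (q : R)

/-- The Gaussian binomial coefficient `[n choose k]_q` for `q` in a commutative semiring, given by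
the same `q`-Pascal recursion as `gaussNat`. -/
def gaussBinom : ℕ → ℕ → R
  | _, 0 => 1
  | 0, _ + 1 => 0
  | n + 1, k + 1 => gaussBinom n k + q ^ (k + 1) * gaussBinom n (k + 1)

@[simp]
theorem gaussBinom_zero_right (n : ℕ) : gaussBinom q n 0 = 1 := by
  cases n <;> rfl

@[simp]
theorem gaussBinom_zero_succ (k : ℕ) : gaussBinom q 0 (k + 1) = 0 :=
  rfl

theorem gaussBinom_succ_succ (n k : ℕ) :
    gaussBinom q (n + 1) (k + 1) = gaussBinom q n k + q ^ (k + 1) * gaussBinom q n (k + 1) :=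
  rfl

theorem gaussBinom_eq_zero_of_lt {n k : ℕ} (h : n < k) : gaussBinom q n k = 0 := by
  induction n generalizing k with
  | zero =>
    obtain ⟨k, rfl⟩ := Nat.exists_eq_add_one.mpr h
    rfl
  | succ n ih =>
    obtain ⟨k, rfl⟩ := Nat.exists_eq_add_one.mpr (Nat.zero_lt_of_lt h)
    rw [gaussBinom_succ_succ, ih (by lia), ih (by lia), mul_zero, add_zero]

@[simp]
theorem gaussBinom_self (n : ℕ) : gaussBinom q n n = 1 := by
  induction n with
  | zero => rfl
  | succ n ih =>
    rw [gaussBinom_succ_succ, ih, gaussBinom_eq_zero_of_lt q n.lt_succ_self, mul_zero, add_zero]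

-- Both sides satisfy the `q`-Pascal rule for the `q`-multinomial coefficient `[j, k, n - k]`.
theorem gaussBinom_add_mul_gaussBinom_add : ∀ n k j : ℕ,
    gaussBinom q (n + j) (k + j) * gaussBinom q (k + j) j =
      gaussBinom q (n + j) j * gaussBinom q n k
  | _, _, 0 => by simp
  | _, 0, _ + 1 => by simp
  | 0, k + 1, j + 1 => by
    rw [gaussBinom_eq_zero_of_lt q (by lia : 0 + (j + 1) < k + 1 + (j + 1)),
      gaussBinom_zero_succ, zero_mul, mul_zero]
  | n + 1, k + 1, j + 1 => by
    have drop_j := gaussBinom_add_mul_gaussBinom_add (n + 1) (k + 1) j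
    have drop_k := gaussBinom_add_mul_gaussBinom_add n k (j + 1)
    have drop_n := gaussBinom_add_mul_gaussBinom_add n (k + 1) (j + 1)
    simp only [← add_assoc, add_right_comm _ 1 j] at drop_j drop_k drop_n ⊢
    calc gaussBinom q (n + j + 1 + 1) (k + j + 1 + 1) * gaussBinom q (k + j + 1 + 1) (j + 1)
      _ = gaussBinom q (n + j + 1) (k + j + 1) * gaussBinom q (k + j + 1) j
          + q ^ (j + 1) *
            (gaussBinom q (n + j + 1) (k + j + 1) * gaussBinom q (k + j + 1) (j + 1))
          + q ^ (k + j + 2) *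
            (gaussBinom q (n + j + 1) (k + j + 1 + 1) * gaussBinom q (k + j + 1 + 1) (j + 1)) := by
        rw [gaussBinom_succ_succ q (n + j + 1), gaussBinom_succ_succ q (k + j + 1)]
        ring
      _ = gaussBinom q (n + j + 1) j * gaussBinom q (n + 1) (k + 1)
          + q ^ (j + 1) * (gaussBinom q (n + j + 1) (j + 1) * gaussBinom q n k)
          + q ^ (k + j + 2) * (gaussBinom q (n + j + 1) (j + 1) * gaussBinom q n (k + 1)) := by
        rw [drop_j, drop_k, drop_n]
      _ = gaussBinom q (n + j + 1 + 1) (j + 1) * gaussBinom q (n + 1) (k + 1) := by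
        rw [gaussBinom_succ_succ q (n + j + 1), gaussBinom_succ_succ q n]
        ring

-- The truncation in `m - i` is harmless, since `[m, i]` vanishes for `i > m`.
theorem gaussBinom_add_eq_sum_antidiagonal (m n k : ℕ) :
    gaussBinom q (m + n) k =
      ∑ ij ∈ antidiagonal k,
        gaussBinom q m ij.1 * gaussBinom q n ij.2 * q ^ (ij.2 * (m - ij.1)) := by
  induction m generalizing k with
  | zero => cases k <;> simp [Nat.sum_antidiagonal_succ]
  | succ m ih =>
    cases k with
    | zero => simp
    | succ k =>
      have pascal_weighted (i j : ℕ) :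
          gaussBinom q (m + 1) (i + 1) * q ^ (j * (m - i)) =
            gaussBinom q m i * q ^ (j * (m - i)) +
              q ^ (i + j + 1) * (gaussBinom q m (i + 1) * q ^ (j * (m - (i + 1)))) := by
        rw [gaussBinom_succ_succ, add_mul]
        rcases lt_or_ge i m with h | h
        · obtain ⟨r, rfl⟩ := Nat.exists_eq_add_of_lt h
          rw [show i + r + 1 - i = r + 1 by lia, show i + r + 1 - (i + 1) = r by lia]
          ring
        · simp [gaussBinom_eq_zero_of_lt q (Nat.lt_succ_of_le h)]
      rw [add_right_comm, gaussBinom_succ_succ, ih, ih, Nat.sum_antidiagonal_succ,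
        Nat.sum_antidiagonal_succ, mul_add, mul_sum, add_left_comm, ← sum_add_distrib]
      congr 1
      · simp only [gaussBinom_zero_right, Nat.sub_zero]
        ring
      · refine sum_congr rfl fun ⟨i, j⟩ hij ↦ ?_
        obtain rfl : i + j = k := mem_antidiagonal.mp hij
        dsimp only
        rw [Nat.add_sub_add_right, mul_right_comm (gaussBinom q (m + 1) (i + 1)), pascal_weighted]
        ring

theorem gaussBinom_add_self_eq_sum_range (m n : ℕ) :
    gaussBinom q (m + n) m =
      ∑ j ∈ range (m + 1), gaussBinom q m (m - j) * gaussBinom q n j * q ^ j ^ 2 := by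
  rw [gaussBinom_add_eq_sum_antidiagonal, ← Nat.sum_antidiagonal_swap,
    Nat.sum_antidiagonal_eq_sum_range_succ_mk]
  refine sum_congr rfl fun j hj ↦ ?_
  simp only [Prod.fst_swap, Prod.snd_swap, Nat.sub_sub_self (mem_range_succ_iff.mp hj), sq]

/-- The Gaussian binomial coefficient with integer arguments, extended by `0` outside
`0 ≤ k ≤ n`; the counterpart of `gaussZ` over a commutative semiring. -/
def gaussBinomInt (n k : ℤ) : R :=
  if 0 ≤ k ∧ k ≤ n then gaussBinom q n.toNat k.toNat else 0

theorem gaussBinomInt_natCast (n k : ℕ) : gaussBinomInt q n k = gaussBinom q n k := by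
  unfold gaussBinomInt
  split_ifs with h
  · simp only [Int.toNat_natCast]
  · rw [gaussBinom_eq_zero_of_lt q (by lia)]

theorem gaussBinomInt_of_neg {n k : ℤ} (h : k < 0) : gaussBinomInt q n k = 0 :=
  if_neg fun hk ↦ h.not_ge hk.1

theorem gaussBinomInt_of_lt {n k : ℤ} (h : n < k) : gaussBinomInt q n k = 0 :=
  if_neg fun hk ↦ h.not_ge hk.2

theorem gaussBinomInt_mul_gaussBinomInt_sub (n k j : ℤ) :
    gaussBinomInt q n j * gaussBinomInt q (n - j) (k - j) =
      gaussBinomInt q n k * gaussBinomInt q k j := by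
  rcases lt_or_ge j 0 with hj | hj
  · simp only [gaussBinomInt_of_neg q hj, zero_mul, mul_zero]
  rcases lt_or_ge k j with hkj | hjk
  · simp only [gaussBinomInt_of_neg q (sub_neg.mpr hkj), gaussBinomInt_of_lt q hkj, mul_zero]
  rcases lt_or_ge n k with hnk | hkn
  · simp only [gaussBinomInt_of_lt q hnk, gaussBinomInt_of_lt q (sub_lt_sub_right hnk j), zero_mul,
      mul_zero]
  lift j to ℕ using hj
  obtain ⟨k, rfl⟩ := Int.exists_add_of_le hjk
  obtain ⟨n, rfl⟩ := Int.exists_add_of_le hkn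
  have revision := gaussBinom_add_mul_gaussBinom_add q (k + n) k j
  simp only [← gaussBinomInt_natCast] at revision
  push_cast at revision
  convert revision.symm using 3 <;> ring

theorem bounds_of_gaussBinomInt_mul_gaussBinomInt_mul_ne_zero {m n t : ℤ} {x : R}
    (h : gaussBinomInt q m (m - t) * gaussBinomInt q n t * x ≠ 0) : 0 ≤ t ∧ t ≤ m ∧ t ≤ n := by
  contrapose! h
  rcases lt_or_ge t 0 with h0 | h0
  · rw [gaussBinomInt_of_neg q h0, mul_zero, zero_mul]
  rcases lt_or_ge m t with hm | hm
  · rw [gaussBinomInt_of_neg q (sub_neg.mpr hm), zero_mul, zero_mul]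
  · rw [gaussBinomInt_of_lt q (h h0 hm), mul_zero, zero_mul]

theorem finsum_gaussBinomInt_mul_gaussBinomInt_mul_pow_sq (m n : ℤ) :
    ∑ᶠ t : ℤ, gaussBinomInt q m (m - t) * gaussBinomInt q n t * q ^ t.natAbs ^ 2 =
      gaussBinomInt q (m + n) m := by
  by_cases hmn : 0 ≤ m ∧ 0 ≤ n
  · obtain ⟨hm, hn⟩ := hmn
    lift m to ℕ using hm
    lift n to ℕ using hn
    rw [finsum_int_eq_sum_range (n := m + 1), ← Nat.cast_add, gaussBinomInt_natCast,
      gaussBinom_add_self_eq_sum_range]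
    · refine sum_congr rfl fun j hj ↦ ?_
      rw [← Nat.cast_sub (mem_range_succ_iff.mp hj), gaussBinomInt_natCast, gaussBinomInt_natCast,
        Int.natAbs_natCast]
    · intro t ht
      have bounds := bounds_of_gaussBinomInt_mul_gaussBinomInt_mul_ne_zero q ht
      lia
  · have rhs_eq_zero : gaussBinomInt q (m + n) m = 0 := if_neg (by lia)
    rw [rhs_eq_zero]
    refine finsum_eq_zero_of_forall_eq_zero fun t ↦ ?_
    by_contra ht
    have bounds := bounds_of_gaussBinomInt_mul_gaussBinomInt_mul_ne_zero q ht
    lia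

theorem finsum_gaussBinomInt_mul_gaussBinomInt_mul_gaussBinomInt_mul_pow_sq (m n k : ℤ) :
    ∑ᶠ t : ℤ, gaussBinomInt q n t * gaussBinomInt q m (m - t) * gaussBinomInt q (n - t) (k - t) *
        q ^ t.natAbs ^ 2 =
      gaussBinomInt q n k * gaussBinomInt q (m + k) m := by
  have finite_support : Function.HasFiniteSupport fun t : ℤ ↦
      gaussBinomInt q m (m - t) * gaussBinomInt q k t * q ^ t.natAbs ^ 2 :=
    (Set.finite_Icc 0 m).subset fun t ht ↦
      have bounds := bounds_of_gaussBinomInt_mul_gaussBinomInt_mul_ne_zero q ht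
      ⟨bounds.1, bounds.2.1⟩
  rw [← finsum_gaussBinomInt_mul_gaussBinomInt_mul_pow_sq, mul_finsum' _ _ finite_support]
  refine finsum_congr fun t ↦ ?_
  rw [mul_right_comm (gaussBinomInt q n t), gaussBinomInt_mul_gaussBinomInt_sub]
  ring

theorem gauss_identity_first_general (a b c d : ℤ) :
    ∑ᶠ s : ℤ, gaussBinomInt q (a - b) (b - s) * gaussBinomInt q (b - c) (s - c) *
        gaussBinomInt q (a - 2 * b + s) (d - 2 * b + s) * q ^ (b - s).natAbs ^ 2 =
      gaussBinomInt q (a - b) (d - b) * gaussBinomInt q (d - c) (b - c) := by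
  rw [show d - c = b - c + (d - b) by ring,
    ← finsum_gaussBinomInt_mul_gaussBinomInt_mul_gaussBinomInt_mul_pow_sq,
    ← finsum_comp_equiv (Equiv.subLeft b)]
  refine finsum_congr fun t ↦ ?_
  rw [Equiv.subLeft_apply, sub_sub_cancel, sub_right_comm b t c,
    show a - 2 * b + (b - t) = a - b - t by ring, show d - 2 * b + (b - t) = d - b - t by ring]

end GaussBinom

theorem gaussNat_eq_gaussBinom (q n k : ℕ) : gaussNat q n k = gaussBinom q n k := by
  induction n generalizing k with
  | zero => cases k <;> rfl
  | succ n ih =>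
    cases k with
    | zero => rfl
    | succ k => rw [gaussNat, gaussBinom_succ_succ, ih, ih]

theorem gaussZ_eq_gaussBinomInt (q : ℕ) (n k : ℤ) : gaussZ q n k = gaussBinomInt q n k := by
  simp only [gaussZ, gaussBinomInt, gaussNat_eq_gaussBinom]

/-- for `a ≥ d ≥ b ≥ c`,
`Σ_s [a−b, b−s]_q [b−c, s−c]_q [a−2b+s, d−2b+s]_q q^{(b−s)²} = [a−b, d−b]_q [d−c, b−c]_q`,
the sum being over all integers `s` (only finitely many terms are nonzero). -/
theorem gauss_identity_first (q : ℕ) (a b c d : ℕ)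
    (hdc : c ≤ b) (hbd : b ≤ d) (hda : d ≤ a) :
    (∑ᶠ s : ℤ, gaussZ q ((a : ℤ) - b) ((b : ℤ) - s) * gaussZ q ((b : ℤ) - c) (s - c) *
        gaussZ q ((a : ℤ) - 2 * b + s) ((d : ℤ) - 2 * b + s) *
        q ^ (((b : ℤ) - s).natAbs ^ 2)) =
      gaussZ q ((a : ℤ) - b) ((d : ℤ) - b) * gaussZ q ((d : ℤ) - c) ((b : ℤ) - c) := by
  simp only [gaussZ_eq_gaussBinomInt]
  exact gauss_identity_first_general q a b c d
end

section
/- Let T be a cyclic nilpotent linear operator on an N-dimensional vector space V over F_q and suppose N ≥ a_{1,1} ≥ a_{1,2} ≥ a_{2,1} ≥ a_{2,2} ≥ ⋯ ≥ a_{r,1} ≥ a_{r,2} ≥ 0, with the conventions a_{0,1} = a_{0,2} = N and a_{r+1,1} = a_{r+1,2} = 0. Then |[(a_{1,1},a_{1,2}),…,(a_{r,1},a_{r,2})]_T| = ∏_{i=1}^{r} [a_{i−1,1} − a_{i,1} choose a_{i,1} − a_{i,2}]_q [a_{i,1} − a_{i+1,1} choose a_{i,2} − a_{i+1,1}]_q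 q^{(a_{i,1} − a_{i,2})^2}. -/
/-- The set `(a,b)_T` of subspaces `W` with `dim W = a` and `dim (W ∩ T⁻¹W) = b`. -/
def pairSet {F V : Type*} [Field F] [AddCommGroup V] [Module F V]
    (T : V →ₗ[F] V) (a b : ℕ) : Set (Submodule F V) :=
  {W | Module.finrank F W = a ∧ Module.finrank F ↥(W ⊓ W.comap T) = b}

/-- The set `[(a₁,₁,a₁,₂),…,(a_r,₁,a_r,₂)]_T`. -/
def tupleSet {F V : Type*} [Field F] [AddCommGroup V] [Module F V]
    (T : V →ₗ[F] V) (r : ℕ) (a : Fin r → ℕ × ℕ) : Set (Fin r → Submodule F V) :=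
  {W | (∀ i, W i ∈ pairSet T (a i).1 (a i).2) ∧
    ∀ (i : Fin r) (h : (i : ℕ) + 1 < r),
      W ⟨(i : ℕ) + 1, h⟩ ⊔ (W ⟨(i : ℕ) + 1, h⟩).map T ≤ W i}

/-- `T` is a cyclic operator: some vector `v` has `{v, Tv, …, T^{N-1}v}` spanning `V`,
where `N = dim V`. -/
def IsCyclicOp {F V : Type*} [Field F] [AddCommGroup V] [Module F V]
    (T : V →ₗ[F] V) : Prop :=
  ∃ v : V, Submodule.span F
    (Set.range fun i : Fin (Module.finrank F V) => (T ^ (i : ℕ)) v) = ⊤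

/-!
Call tuples `W` and `U` linked when `W (i + 1) ≤ U i ≤ W i ⊓ (W i).comap T` for all `i`, where `⊥`
follows the last term of `W`. Given the dimensions `b` of the subspaces `W i ⊓ (W i).comap T`, the
number of `U` of dimensions `u` linked to `W` is a product of Gaussian binomials. The condition can
also be read as `U i ⊔ (U i).map T ≤ W i ≤ U (i - 1)`, where `⊤` precedes `U 0`, so the number of
`W` of dimensions `a` linked to `U` is a product of Gaussian binomials as well. Counting the linked
pairs in both ways relates the cardinalities for `a` to those for `u`. The claimed product satisfies
the same relations, by the `q`-Vandermonde convolution and a telescoping product.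

For fixed `a` these relations, with `u < a`, form a triangular system in the unknown cardinalities,
which determines them by induction on `a` once the case `b = a` is known. That case concerns tuples
of `T`-invariant subspaces, of which a cyclic nilpotent operator has exactly one in each dimension
`d`, namely `ker (T ^ d)`.
-/

section GaussianBinomial

variable (q : ℕ)

lemma gaussNat_zero_right (n : ℕ) : gaussNat q n 0 = 1 := by
  cases n <;> rfl

lemma gaussNat_eq_zero_of_lt : ∀ {n k : ℕ}, n < k → gaussNat q n k = 0
  | _, 0, h => absurd h (Nat.not_lt_zero _)
  | 0, _ + 1, _ => rfl
  | n + 1, k + 1, h => by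
    simp only [gaussNat, gaussNat_eq_zero_of_lt (by lia : n < k),
      gaussNat_eq_zero_of_lt (by lia : n < k + 1), mul_zero, add_zero]

lemma gaussNat_self (n : ℕ) : gaussNat q n n = 1 := by
  induction n with
  | zero => rfl
  | succ n ih => rw [gaussNat, ih, gaussNat_eq_zero_of_lt q n.lt_succ_self, mul_zero, add_zero]

/-- The `q`-factorial `[n]_q! = ∏_{i=1}^{n} (1 + q + ⋯ + q^{i-1})`, used to expand Gaussian binomial
coefficients. -/
def qFactorial (n : ℕ) : ℕ :=
  ∏ i ∈ Finset.range n, ∑ j ∈ Finset.range (i + 1), q ^ j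

lemma qFactorial_zero : qFactorial q 0 = 1 := rfl

lemma qFactorial_succ (n : ℕ) :
    qFactorial q (n + 1) = qFactorial q n * ∑ j ∈ Finset.range (n + 1), q ^ j :=
  Finset.prod_range_succ _ _

lemma qFactorial_pos (n : ℕ) : 0 < qFactorial q n :=
  Finset.prod_pos fun i _ => by simp [Finset.sum_range_succ']

lemma qFactorial_cast_ne_zero (n : ℕ) : (qFactorial q n : ℚ) ≠ 0 :=
  Nat.cast_ne_zero.mpr (qFactorial_pos q n).ne'

lemma gaussNat_add_mul_qFactorial :
    ∀ k m : ℕ, gaussNat q (k + m) k * (qFactorial q k * qFactorial q m) = qFactorial q (k + m)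
  | 0, m => by simp [gaussNat_zero_right, qFactorial_zero]
  | k + 1, 0 => by simp [gaussNat_self, qFactorial_zero]
  | k + 1, m + 1 => by
    have hk := gaussNat_add_mul_qFactorial k (m + 1)
    have hm := gaussNat_add_mul_qFactorial (k + 1) m
    rw [Nat.add_right_comm, Nat.add_assoc] at hm
    have hsum : ∑ j ∈ Finset.range (k + (m + 1) + 1), q ^ j =
        ∑ j ∈ Finset.range (k + 1), q ^ j + q ^ (k + 1) * ∑ j ∈ Finset.range (m + 1), q ^ j := by
      rw [Nat.add_right_comm, Finset.sum_range_add]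
      simp only [pow_add, Finset.mul_sum]
    rw [Nat.add_right_comm, gaussNat]
    calc _ = gaussNat q (k + (m + 1)) k * (qFactorial q k * qFactorial q (m + 1)) *
            ∑ j ∈ Finset.range (k + 1), q ^ j +
          gaussNat q (k + (m + 1)) (k + 1) * (qFactorial q (k + 1) * qFactorial q m) *
            (q ^ (k + 1) * ∑ j ∈ Finset.range (m + 1), q ^ j) := by
          rw [qFactorial_succ q k, qFactorial_succ q m]; ring
      _ = qFactorial q (k + (m + 1) + 1) := by
          rw [hk, hm, ← mul_add, ← hsum, ← qFactorial_succ]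

lemma gaussNat_mul_qFactorial {n k : ℕ} (h : k ≤ n) :
    gaussNat q n k * (qFactorial q k * qFactorial q (n - k)) = qFactorial q n := by
  obtain ⟨m, rfl⟩ := Nat.exists_eq_add_of_le h
  rw [Nat.add_sub_cancel_left, gaussNat_add_mul_qFactorial]

lemma gaussNat_eq_div {n k : ℕ} (h : k ≤ n) :
    (gaussNat q n k : ℚ) = qFactorial q n / (qFactorial q k * qFactorial q (n - k)) := by
  rw [eq_div_iff (mul_ne_zero (qFactorial_cast_ne_zero q _) (qFactorial_cast_ne_zero q _))]
  exact_mod_cast gaussNat_mul_qFactorial q h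

lemma gaussNat_symm {n k : ℕ} (h : k ≤ n) : gaussNat q n (n - k) = gaussNat q n k := by
  have hq : (gaussNat q n (n - k) : ℚ) = gaussNat q n k := by
    rw [gaussNat_eq_div q h, gaussNat_eq_div q (n.sub_le k), Nat.sub_sub_self h, mul_comm]
  exact_mod_cast hq

lemma gaussNat_succ_succ_right {n k : ℕ} (h : k ≤ n) :
    gaussNat q (n + 1) (k + 1) = gaussNat q n (k + 1) + q ^ (n - k) * gaussNat q n k := by
  obtain rfl | hlt := h.eq_or_lt
  · simp [gaussNat_self, gaussNat_eq_zero_of_lt]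
  · obtain ⟨m, hm⟩ : ∃ m, n - k = m + 1 := ⟨n - k - 1, by lia⟩
    rw [← gaussNat_symm q (by lia : k + 1 ≤ n + 1), ← gaussNat_symm q (by lia : k + 1 ≤ n),
      ← gaussNat_symm q h, Nat.add_sub_add_right, hm, gaussNat, show n - (k + 1) = m by lia]

lemma gaussNat_mul_gaussNat_sub (n k l : ℕ) :
    gaussNat q n k * gaussNat q (n - k) l = gaussNat q n l * gaussNat q (n - l) k := by
  by_cases h : k + l ≤ n
  · have hq : (gaussNat q n k * gaussNat q (n - k) l : ℚ) =
        gaussNat q n l * gaussNat q (n - l) k := by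
      have hne := qFactorial_cast_ne_zero q
      rw [gaussNat_eq_div q (by lia : k ≤ n), gaussNat_eq_div q (by lia : l ≤ n - k),
        gaussNat_eq_div q (by lia : l ≤ n), gaussNat_eq_div q (by lia : k ≤ n - l),
        Nat.sub_right_comm n l k]
      field_simp [hne]
    exact_mod_cast hq
  · have hzero : ∀ {k l}, ¬ k + l ≤ n → gaussNat q n k * gaussNat q (n - k) l = 0 := by
      intro k l hkl
      by_cases hk : n < k
      · rw [gaussNat_eq_zero_of_lt q hk, zero_mul]
      · rw [gaussNat_eq_zero_of_lt q (by lia : n - k < l), mul_zero]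
    rw [hzero h, hzero (by rwa [add_comm])]

/-- The `q`-Vandermonde convolution, indexed so that no subtraction occurs. -/
lemma sum_gaussNat_mul_gaussNat_add (A B k M : ℕ) (hM : A < M) :
    ∑ m ∈ Finset.range M, gaussNat q A m * gaussNat q B (m + k) * q ^ (m * (m + k)) =
      gaussNat q (A + B) (A + k) := by
  induction A generalizing k M with
  | zero =>
    rw [Finset.sum_eq_single_of_mem 0 (Finset.mem_range.mpr hM) fun m _ hm => by
      rw [gaussNat_eq_zero_of_lt q (Nat.pos_of_ne_zero hm), zero_mul, zero_mul]]
    simp [gaussNat_zero_right]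
  | succ A ih =>
    obtain ⟨M, rfl⟩ : ∃ M', M = M' + 1 := ⟨M - 1, by lia⟩
    rw [Nat.add_right_comm A 1 B, Nat.add_right_comm A 1 k, gaussNat, ← ih k (M + 1) (by lia),
      Nat.add_assoc A k 1, ← ih (k + 1) M (by lia), Finset.sum_range_succ',
      Finset.sum_range_succ', Finset.mul_sum, add_right_comm, ← Finset.sum_add_distrib]
    simp only [gaussNat_zero_right]
    congr 1
    refine Finset.sum_congr rfl fun m _ => ?_
    by_cases hm : m ≤ A
    · obtain ⟨d, rfl⟩ := Nat.exists_eq_add_of_le hm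
      rw [gaussNat_succ_succ_right q hm, Nat.add_sub_cancel_left, Nat.add_right_comm m 1 k,
        ← Nat.add_assoc m k 1]
      ring
    · rw [gaussNat_eq_zero_of_lt q (by lia : A + 1 < m + 1),
        gaussNat_eq_zero_of_lt q (by lia : A < m + 1), gaussNat_eq_zero_of_lt q (by lia : A < m)]
      ring

lemma sum_gaussNat_mul_gaussNat (A B M : ℕ) (hM : A < M ∨ B < M) :
    ∑ m ∈ Finset.range M, gaussNat q A m * gaussNat q B m * q ^ m ^ 2 =
      gaussNat q (A + B) B := by
  wlog hA : A < M generalizing A B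
  · rw [← gaussNat_symm q (Nat.le_add_left B A), Nat.add_sub_cancel, add_comm A,
      ← this B A hM.symm (hM.resolve_left hA)]
    exact Finset.sum_congr rfl fun m _ => by rw [mul_comm (gaussNat q A m)]
  · rw [← gaussNat_symm q (Nat.le_add_left B A), Nat.add_sub_cancel]
    simpa only [add_zero, ← sq] using sum_gaussNat_mul_gaussNat_add q A B 0 M hA

lemma sum_gaussNat_mul_gaussNat_mul_gaussNat_sub (x y z M : ℕ) (hM : x < M ∨ y < M) :
    ∑ m ∈ Finset.range M, gaussNat q y m * gaussNat q x m * q ^ m ^ 2 * gaussNat q (x - m) z =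
      gaussNat q x z * gaussNat q (x - z + y) y := by
  rw [← sum_gaussNat_mul_gaussNat q (x - z) y M (hM.imp_left (by lia)), Finset.mul_sum]
  refine Finset.sum_congr rfl fun m _ => ?_
  calc _ = gaussNat q y m * q ^ m ^ 2 * (gaussNat q x m * gaussNat q (x - m) z) := by ring
    _ = gaussNat q y m * q ^ m ^ 2 * (gaussNat q x z * gaussNat q (x - z) m) := by
      rw [gaussNat_mul_gaussNat_sub]
    _ = _ := by ring

lemma gaussNat_mul_prod_pow_sub_pow (n k : ℕ) :
    (gaussNat q n k : ℤ) * ∏ i ∈ Finset.range k, ((q : ℤ) ^ k - q ^ i) =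
      ∏ i ∈ Finset.range k, ((q : ℤ) ^ n - q ^ i) := by
  have prod_succ (a k : ℕ) : ∏ i ∈ Finset.range (k + 1), ((q : ℤ) ^ (a + 1) - q ^ i) =
      (q ^ (a + 1) - 1) * (q ^ k * ∏ i ∈ Finset.range k, ((q : ℤ) ^ a - q ^ i)) := by
    simp only [Finset.prod_range_succ', pow_succ', ← mul_sub, Finset.prod_mul_distrib,
      Finset.prod_const, Finset.card_range, pow_zero]
    ring
  induction n generalizing k with
  | zero => cases k <;> simp [gaussNat, Finset.prod_range_succ']
  | succ n ih =>
    cases k with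
    | zero => simp [gaussNat]
    | succ k =>
      have hk := ih k
      have hk' := ih (k + 1)
      rw [prod_succ, Finset.prod_range_succ (fun i => (q : ℤ) ^ n - q ^ i)] at hk'
      rw [prod_succ, prod_succ, gaussNat]
      push_cast
      linear_combination (q : ℤ) ^ k * (q ^ (k + 1) - 1) * hk + (q : ℤ) ^ (k + 1) * hk'

lemma gaussNat_mul_prod_pow_sub_pow_nat {q n k : ℕ} (hq : 0 < q) (hk : k ≤ n) :
    gaussNat q n k * ∏ i : Fin k, (q ^ k - q ^ (i : ℕ)) = ∏ i : Fin k, (q ^ n - q ^ (i : ℕ)) := by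
  have hcast (m : ℕ) (hm : k ≤ m) : ((∏ i : Fin k, (q ^ m - q ^ (i : ℕ)) : ℕ) : ℤ) =
      ∏ i ∈ Finset.range k, ((q : ℤ) ^ m - q ^ i) := by
    rw [Finset.prod_range, Nat.cast_prod]
    refine Finset.prod_congr rfl fun i _ => ?_
    rw [Nat.cast_sub (Nat.pow_le_pow_right hq (i.2.le.trans hm)), Nat.cast_pow, Nat.cast_pow]
  zify
  rw [← Nat.cast_prod, ← Nat.cast_prod, hcast k le_rfl, hcast n hk, gaussNat_mul_prod_pow_sub_pow]

lemma gaussZ_natCast (n k : ℕ) : gaussZ q n k = gaussNat q n k := by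
  unfold gaussZ
  split_ifs with h
  · simp only [Int.toNat_natCast]
  · rw [gaussNat_eq_zero_of_lt]
    lia

lemma gaussZ_natCast_sub {n m k l : ℕ} (hn : m ≤ n) (hk : l ≤ k) :
    gaussZ q ((n : ℤ) - m) ((k : ℤ) - l) = gaussNat q (n - m) (k - l) := by
  rw [← Nat.cast_sub hn, ← Nat.cast_sub hk, gaussZ_natCast]

end GaussianBinomial

section SubspaceCount

open Module Submodule

variable {F V V' : Type*} [Field F] [AddCommGroup V] [Module F V] [FiniteDimensional F V]
  [AddCommGroup V'] [Module F V']

lemma finrank_map_add_finrank_inf_ker (f : V →ₗ[F] V') (W : Submodule F V) :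
    finrank F (W.map f) + finrank F ↥(W ⊓ LinearMap.ker f) = finrank F W := by
  rw [← LinearMap.finrank_range_add_finrank_ker (f.domRestrict W), LinearMap.range_domRestrict,
    LinearMap.ker_domRestrict, ← finrank_map_subtype_eq W, map_comap_subtype]

lemma span_range_coe_eq_of_linearIndependent {k : ℕ} {W : Submodule F V} (hW : finrank F W = k)
    {s : Fin k → W} (hs : LinearIndependent F s) : span F (Set.range fun i => (s i : V)) = W := by
  refine eq_of_le_of_finrank_eq (span_le.mpr (Set.range_subset_iff.mpr fun i => (s i).2)) ?_
  exact (finrank_span_eq_card (hs.map' W.subtype W.ker_subtype)).trans (by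
    rw [Fintype.card_fin, hW])

/-- A linearly independent family in `V` is a basis of exactly one subspace, its span. -/
lemma bijective_coe_linearIndependent (k : ℕ) :
    Function.Bijective fun p : Σ W : {W : Submodule F V // finrank F W = k},
        {s : Fin k → W.1 // LinearIndependent F s} =>
      (⟨fun i => (p.2.1 i : V), p.2.2.map' p.1.1.subtype p.1.1.ker_subtype⟩ :
        {s : Fin k → V // LinearIndependent F s}) := by
  constructor
  · rintro ⟨⟨W, hW⟩, s, hs⟩ ⟨⟨W', hW'⟩, s', hs'⟩ h
    have hval : (fun i => (s i : V)) = fun i => (s' i : V) := congrArg Subtype.val h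
    obtain rfl : W = W' := by
      rw [← span_range_coe_eq_of_linearIndependent hW hs,
        ← span_range_coe_eq_of_linearIndependent hW' hs', hval]
    obtain rfl : s = s' := funext fun i => Subtype.ext (congrFun hval i)
    rfl
  · rintro ⟨s, hs⟩
    have hspan : finrank F (span F (Set.range s)) = k := by
      rw [finrank_span_eq_card hs, Fintype.card_fin]
    exact ⟨⟨⟨span F (Set.range s), hspan⟩, _, linearIndependent_span hs⟩, rfl⟩

variable [Fintype F]

lemma ncard_finrank_eq (k : ℕ) :
    {W : Submodule F V | finrank F W = k}.ncard = gaussNat (Fintype.card F) (finrank F V) k := by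
  have : Finite V := Module.finite_of_finite F
  have := Fintype.ofFinite {W : Submodule F V // finrank F W = k}
  by_cases hk : k ≤ finrank F V
  · have hcount : {W : Submodule F V | finrank F W = k}.ncard *
        ∏ i : Fin k, (Fintype.card F ^ k - Fintype.card F ^ (i : ℕ)) =
          ∏ i : Fin k, (Fintype.card F ^ finrank F V - Fintype.card F ^ (i : ℕ)) := by
      rw [← card_linearIndependent hk,
        ← Nat.card_eq_of_bijective _ (bijective_coe_linearIndependent k), Nat.card_sigma,
        Finset.sum_congr rfl fun W _ => (card_linearIndependent W.2.ge).trans (by rw [W.2]),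
        Finset.sum_const, Finset.card_univ, smul_eq_mul,
        ← Nat.card_eq_fintype_card (α := {W : Submodule F V // finrank F W = k})]
      rfl
    refine Nat.eq_of_mul_eq_mul_right (Finset.prod_pos fun i _ => ?_)
      (hcount.trans (gaussNat_mul_prod_pow_sub_pow_nat Fintype.card_pos hk).symm)
    exact Nat.sub_pos_of_lt (Nat.pow_lt_pow_right Fintype.one_lt_card i.2)
  · rw [gaussNat_eq_zero_of_lt _ (not_le.mp hk), Set.ncard_eq_zero]
    exact Set.eq_empty_of_forall_notMem fun W hW => hk (hW ▸ W.finrank_le)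

lemma ncard_finrank_eq_and_le {k : ℕ} {A : Submodule F V} (hk : finrank F A ≤ k) :
    {W : Submodule F V | finrank F W = k ∧ A ≤ W}.ncard =
      gaussNat (Fintype.card F) (finrank F V - finrank F A) (k - finrank F A) := by
  have hdim (U : Submodule F (V ⧸ A)) :
      finrank F (U.comap A.mkQ) = finrank F U + finrank F A := by
    rw [← finrank_map_add_finrank_inf_ker A.mkQ, map_comap_eq_of_surjective A.mkQ_surjective,
      ker_mkQ, inf_eq_right.mpr (le_comap_mkQ A U)]
  rw [← finrank_quotient, ← ncard_finrank_eq,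
    ← Set.ncard_image_of_injective _ (comap_injective_of_surjective A.mkQ_surjective)]
  congr 1
  ext W
  constructor
  · rintro ⟨hW, hAW⟩
    have hcomap : (W.map A.mkQ).comap A.mkQ = W := by rwa [comap_map_mkQ, sup_eq_right]
    refine ⟨W.map A.mkQ, Nat.eq_sub_of_add_eq ?_, hcomap⟩
    rw [← hdim, hcomap, hW]
  · rintro ⟨U, hU, rfl⟩
    exact ⟨by rw [hdim, show finrank F U = _ from hU, Nat.sub_add_cancel hk], le_comap_mkQ A U⟩

lemma ncard_finrank_eq_and_le_and_le {k : ℕ} {A B : Submodule F V} (hAB : A ≤ B)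
    (hk : finrank F A ≤ k) :
    {W : Submodule F V | finrank F W = k ∧ A ≤ W ∧ W ≤ B}.ncard =
      gaussNat (Fintype.card F) (finrank F B - finrank F A) (k - finrank F A) := by
  have hA : finrank F (A.comap B.subtype) = finrank F A :=
    (comapSubtypeEquivOfLe hAB).finrank_eq
  rw [← hA, ← ncard_finrank_eq_and_le (hA.trans_le hk),
    ← Set.ncard_image_of_injective _ (map_injective_of_injective B.subtype_injective)]
  congr 1
  ext W
  constructor
  · rintro ⟨hW, hAW, hWB⟩
    exact ⟨W.comap B.subtype, ⟨(comapSubtypeEquivOfLe hWB).finrank_eq.trans hW, comap_mono hAW⟩,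
      by rwa [map_comap_subtype, inf_eq_right]⟩
  · rintro ⟨U, ⟨hU, hAU⟩, rfl⟩
    refine ⟨(finrank_map_subtype_eq B U).trans hU, ?_, map_subtype_le B U⟩
    rw [← inf_eq_right.mpr hAB, ← map_comap_subtype]
    exact map_mono hAU

lemma ncard_finrank_eq_and_le_and_le_of_le_finrank {k : ℕ} {A B : Submodule F V} (hAB : A ≤ B)
    (hk : k ≤ finrank F B) :
    {W : Submodule F V | finrank F W = k ∧ A ≤ W ∧ W ≤ B}.ncard =
      gaussNat (Fintype.card F) (finrank F B - finrank F A) (finrank F B - k) := by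
  have hle := finrank_mono hAB
  obtain hkA | hkA := le_or_gt (finrank F A) k
  · rw [ncard_finrank_eq_and_le_and_le hAB hkA, ← gaussNat_symm _ (Nat.sub_le_sub_right hk _),
      Nat.sub_sub_sub_cancel_right hkA]
  · have : Finite V := Module.finite_of_finite F
    rw [gaussNat_eq_zero_of_lt _ (by lia), Set.ncard_eq_zero]
    exact Set.eq_empty_of_forall_notMem fun W hW =>
      hkA.not_ge (hW.1 ▸ finrank_mono hW.2.1)

end SubspaceCount

section NeighbouringTerms

variable {α β : Type*} {r : ℕ}

/-- The term before the `i`-th one in the sequence `x`, with `t` put in front of `x 0`. -/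
def prevTerm (t : α) (x : Fin r → α) (i : Fin r) : α :=
  (Fin.cons t x : Fin (r + 1) → α) i.castSucc

/-- The term after the `i`-th one in the sequence `x`, with `b` put after the last term of `x`. -/
def nextTerm (b : α) (x : Fin r → α) (i : Fin r) : α :=
  (Fin.snoc x b : Fin (r + 1) → α) i.succ

lemma prevTerm_shift (x : ℕ → α) (i : Fin r) :
    prevTerm (x 0) (fun i : Fin r => x (i + 1)) i = x i := by
  have hcons : (Fin.cons (x 0) fun i : Fin r => x (i + 1)) = fun k : Fin (r + 1) => x k :=
    funext (Fin.cases rfl fun _ => rfl)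
  exact congrFun hcons i.castSucc

lemma nextTerm_shift (x : ℕ → α) (i : Fin r) :
    nextTerm (x (r + 1)) (fun i : Fin r => x (i + 1)) i = x (i + 2) := by
  have hsnoc : (Fin.snoc (fun i : Fin r => x (i + 1)) (x (r + 1)) : Fin (r + 1) → α) =
      fun k : Fin (r + 1) => x (k + 1) :=
    funext (Fin.lastCases (Fin.snoc_last _ _) fun i => Fin.snoc_castSucc (α := fun _ => α) _ _ i)
  exact congrFun hsnoc i.succ

lemma nextTerm_eq_dite (b : α) (x : Fin r → α) (i : Fin r) :
    nextTerm b x i = if h : (i : ℕ) + 1 < r then x ⟨i + 1, h⟩ else b := rfl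

lemma nextTerm_rec {p : α → Prop} {b : α} {x : Fin r → α} (hb : p b) (hx : ∀ i, p (x i))
    (i : Fin r) : p (nextTerm b x i) := by
  rw [nextTerm_eq_dite]
  split_ifs
  exacts [hx _, hb]

lemma map_prevTerm (f : α → β) (t : α) (x : Fin r → α) (i : Fin r) :
    f (prevTerm t x i) = prevTerm (f t) (fun i => f (x i)) i :=
  congrFun (Fin.comp_cons f t x) i.castSucc

lemma map_nextTerm (f : α → β) (b : α) (x : Fin r → α) (i : Fin r) :
    f (nextTerm b x i) = nextTerm (f b) (fun i => f (x i)) i :=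
  congrFun (Fin.comp_snoc f x b) i.succ

lemma nextTerm_mono [Preorder α] (b : α) {x y : Fin r → α} (h : x ≤ y) :
    nextTerm b x ≤ nextTerm b y := by
  intro i
  rw [nextTerm_eq_dite, nextTerm_eq_dite]
  split_ifs
  exacts [h _, le_rfl]

lemma forall_nextTerm_le_iff_forall_le_prevTerm [Preorder α] {b t : α} {x y : Fin r → α}
    (hbt : b ≤ t) (hx : ∀ i, x i ≤ t) (hy : ∀ i, b ≤ y i) :
    (∀ i, nextTerm b x i ≤ y i) ↔ ∀ i, x i ≤ prevTerm t y i := by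
  have hzero : (Fin.snoc x b : Fin (r + 1) → α) 0 ≤ t :=
    Fin.lastCases (motive := fun k => (Fin.snoc x b : Fin (r + 1) → α) k ≤ t)
      (by rwa [Fin.snoc_last]) (fun i => by rw [Fin.snoc_castSucc]; exact hx i) 0
  have hlast : b ≤ (Fin.cons t y : Fin (r + 1) → α) (Fin.last r) :=
    Fin.cases (motive := fun k => b ≤ (Fin.cons t y : Fin (r + 1) → α) k) hbt hy _
  calc (∀ i, nextTerm b x i ≤ y i)
    _ ↔ ∀ k : Fin (r + 1), (Fin.snoc x b : Fin (r + 1) → α) k ≤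
          (Fin.cons t y : Fin (r + 1) → α) k := by
      rw [Fin.forall_fin_succ]
      exact (and_iff_right hzero).symm
    _ ↔ ∀ i, x i ≤ prevTerm t y i := by
      simp only [Fin.forall_fin_succ', Fin.snoc_castSucc, Fin.snoc_last, hlast, and_true]
      rfl

lemma le_prevTerm_of_nextTerm_le {N : ℕ} {x y : Fin r → ℕ} (hx : ∀ i, x i ≤ N)
    (h : nextTerm 0 x ≤ y) : x ≤ prevTerm N y :=
  (forall_nextTerm_le_iff_forall_le_prevTerm zero_le hx fun _ => zero_le).mp h

end NeighbouringTerms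

section DoubleCounting

lemma ncard_setOf_forall {ι α : Type*} [Fintype ι] (p : ι → α → Prop) :
    {x : ι → α | ∀ i, p i (x i)}.ncard = ∏ i, {y | p i y}.ncard := by
  have hpi : {x : ι → α | ∀ i, p i (x i)} = Set.univ.pi fun i => {y | p i y} := by
    ext x
    simp
  simp only [hpi, ← Nat.card_coe_set_eq, Nat.card_congr (Equiv.Set.univPi _), Nat.card_pi]

lemma sum_ncard_fiber_mul {α ι : Type*} [Finite α] {s : Finset α} {f : α → ι} {I : Finset ι}
    (hf : ∀ x ∈ s, f x ∈ I) (M : ι → ℕ) :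
    ∑ i ∈ I, {x | x ∈ s ∧ f x = i}.ncard * M i = ∑ x ∈ s, M (f x) := by
  classical
  rw [← Finset.sum_fiberwise_of_maps_to' hf M]
  refine Finset.sum_congr rfl fun i _ => ?_
  rw [Finset.sum_const, smul_eq_mul, ← Set.ncard_coe_finset, Finset.coe_filter]

/-- Both sides count the pairs `(x, y)` related by `R`. -/
lemma sum_ncard_fiber_mul_eq {α β ι κ : Type*} [Finite α] [Finite β] (R : α → β → Prop)
    {f : α → ι} {g : β → κ} {s : Set α} {t : Set β} {I : Finset ι} {J : Finset κ}
    (hf : ∀ x ∈ s, f x ∈ I) (hg : ∀ y ∈ t, g y ∈ J) (M : ι → ℕ) (L : κ → ℕ)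
    (hM : ∀ x ∈ s, {y | y ∈ t ∧ R x y}.ncard = M (f x))
    (hL : ∀ y ∈ t, {x | x ∈ s ∧ R x y}.ncard = L (g y)) :
    ∑ i ∈ I, {x | x ∈ s ∧ f x = i}.ncard * M i = ∑ j ∈ J, {y | y ∈ t ∧ g y = j}.ncard * L j := by
  classical
  lift s to Finset α using s.toFinite
  lift t to Finset β using t.toFinite
  simp only [Finset.mem_coe] at hf hg hM hL ⊢
  rw [sum_ncard_fiber_mul hf, sum_ncard_fiber_mul hg, ← Finset.sum_congr rfl hM,
    ← Finset.sum_congr rfl hL]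
  simp only [← Finset.coe_filter, Set.ncard_coe_finset]
  exact Finset.sum_card_bipartiteAbove_eq_sum_card_bipartiteBelow R

end DoubleCounting

section SubspaceChains

open Module Submodule

variable {F V : Type*} [Field F] [AddCommGroup V] [Module F V] (T : V →ₗ[F] V) {r : ℕ}

/-- The subspace `W ∩ T⁻¹W`, the largest `U` with `U + TU ⊆ W`. -/
def stepCore (W : Submodule F V) : Submodule F V := W ⊓ W.comap T

/-- The subspace `W + TW`, the smallest `U` with `W ⊆ U ∩ T⁻¹U`. -/
def stepHull (W : Submodule F V) : Submodule F V := W ⊔ W.map T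

lemma gc_stepHull_stepCore : GaloisConnection (stepHull T) (stepCore T) := fun U W => by
  rw [stepHull, stepCore, sup_le_iff, map_le_iff_le_comap, le_inf_iff]

lemma finrank_stepHull_add_finrank_stepCore [FiniteDimensional F V] (W : Submodule F V) :
    finrank F (stepHull T W) + finrank F (stepCore T W) = 2 * finrank F W := by
  have hhull := finrank_map_add_finrank_inf_ker W.mkQ (stepHull T W)
  have hcore := finrank_map_add_finrank_inf_ker (W.mkQ ∘ₗ T) W
  rw [stepHull, Submodule.map_sup, mkQ_map_self, bot_sup_eq, ← map_comp, ker_mkQ,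
    inf_eq_right.mpr le_sup_left] at hhull
  rw [LinearMap.ker_comp, ker_mkQ] at hcore
  rw [stepHull, stepCore]
  lia

/-- The sequences of subspaces of dimensions `a` with `W i ⊇ W (i + 1) + T (W (i + 1))`, a condition
encoded through `stepCore` so that it is vacuous for the last `i`. The set `tupleSet T r` collects
those with prescribed dimensions of the `stepCore T (W i)`. -/
def stepChains (a : Fin r → ℕ) : Set (Fin r → Submodule F V) :=
  {W | (∀ i, finrank F (W i) = a i) ∧ ∀ i, nextTerm ⊥ W i ≤ stepCore T (W i)}

lemma tupleSet_eq (a b : Fin r → ℕ) :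
    tupleSet T r (fun i => (a i, b i)) =
      {W | W ∈ stepChains T a ∧ (fun i => finrank F (stepCore T (W i))) = b} := by
  ext W
  have hnext : (∀ (i : Fin r) (h : (i : ℕ) + 1 < r), stepHull T (W ⟨i + 1, h⟩) ≤ W i) ↔
      ∀ i, nextTerm ⊥ W i ≤ stepCore T (W i) := by
    refine forall_congr' fun i => ?_
    rw [nextTerm_eq_dite]
    split_ifs with h
    · exact (forall_prop_of_true h).trans (gc_stepHull_stepCore T _ _)
    · exact iff_of_true (fun h' => absurd h' h) bot_le
  calc W ∈ tupleSet T r (fun i => (a i, b i))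
    _ ↔ ((∀ i, finrank F (W i) = a i) ∧ ∀ i, finrank F (stepCore T (W i)) = b i) ∧
        ∀ i, nextTerm ⊥ W i ≤ stepCore T (W i) := by
      rw [← hnext, ← forall_and]
      rfl
    _ ↔ _ := and_right_comm.trans (and_congr_right' funext_iff.symm)

/-- The relation `W (i + 1) ⊆ U i ⊆ W i ∩ T⁻¹(W i)` for all `i`, with `⊥` for the missing
`W (i + 1)`; its pairs are the ones counted in two ways. -/
def StepLinked (W U : Fin r → Submodule F V) : Prop :=
  ∀ i, nextTerm ⊥ W i ≤ U i ∧ U i ≤ stepCore T (W i)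

variable {T}

lemma stepLinked_iff {W U : Fin r → Submodule F V} :
    StepLinked T W U ↔ ∀ i, stepHull T (U i) ≤ W i ∧ W i ≤ prevTerm ⊤ U i := by
  simp only [StepLinked, forall_and, gc_stepHull_stepCore T _ _,
    forall_nextTerm_le_iff_forall_le_prevTerm bot_le (fun _ => le_top) (fun _ => bot_le)]
  exact and_comm

lemma forall_nextTerm_le_stepCore_iff {W : Fin r → Submodule F V} :
    (∀ i, nextTerm ⊥ W i ≤ stepCore T (W i)) ↔ ∀ i, stepHull T (W i) ≤ prevTerm ⊤ W i := by
  rw [← forall_nextTerm_le_iff_forall_le_prevTerm bot_le (fun _ => le_top) (fun _ => bot_le)]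
  refine forall_congr' fun i => ?_
  rw [← gc_stepHull_stepCore T, map_nextTerm (stepHull T), (gc_stepHull_stepCore T).l_bot]

lemma StepLinked.left_mem_stepChains {a : Fin r → ℕ} {W U : Fin r → Submodule F V}
    (h : StepLinked T W U) (hW : ∀ i, finrank F (W i) = a i) : W ∈ stepChains T a :=
  ⟨hW, fun i => (h i).1.trans (h i).2⟩

lemma StepLinked.right_mem_stepChains {u : Fin r → ℕ} {W U : Fin r → Submodule F V}
    (h : StepLinked T W U) (hU : ∀ i, finrank F (U i) = u i) : U ∈ stepChains T u :=
  ⟨hU, forall_nextTerm_le_stepCore_iff.mpr fun i =>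
    (stepLinked_iff.mp h i).1.trans (stepLinked_iff.mp h i).2⟩

lemma finrank_nextTerm {a : Fin r → ℕ} {W : Fin r → Submodule F V}
    (hW : ∀ i, finrank F (W i) = a i) (i : Fin r) :
    finrank F ↥(nextTerm ⊥ W i) = nextTerm 0 a i := by
  rw [map_nextTerm (fun U : Submodule F V => finrank F U), finrank_bot]
  simp only [hW]

lemma finrank_prevTerm {a : Fin r → ℕ} {W : Fin r → Submodule F V}
    (hW : ∀ i, finrank F (W i) = a i) (i : Fin r) :
    finrank F ↥(prevTerm ⊤ W i) = prevTerm (finrank F V) a i := by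
  rw [map_prevTerm (fun U : Submodule F V => finrank F U), finrank_top]
  simp only [hW]

variable [FiniteDimensional F V]

lemma finrank_stepCore_mem_Icc {a : Fin r → ℕ} {W : Fin r → Submodule F V}
    (hW : W ∈ stepChains T a) :
    (fun i => finrank F (stepCore T (W i))) ∈ Finset.Icc (nextTerm 0 a) a :=
  Finset.mem_Icc.mpr ⟨fun i => (finrank_nextTerm hW.1 i).symm.trans_le (finrank_mono (hW.2 i)),
    fun i => (hW.1 i).symm.trans_ge (finrank_mono inf_le_left)⟩

variable [Fintype F]

lemma ncard_stepLinked_right {a u : Fin r → ℕ} (hau : nextTerm 0 a ≤ u)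
    {W : Fin r → Submodule F V} (hW : W ∈ stepChains T a) :
    {U | U ∈ stepChains T u ∧ StepLinked T W U}.ncard =
      ∏ i, gaussNat (Fintype.card F) (finrank F (stepCore T (W i)) - nextTerm 0 a i)
        (u i - nextTerm 0 a i) := by
  have hset : {U | U ∈ stepChains T u ∧ StepLinked T W U} =
      {U | ∀ i, finrank F (U i) = u i ∧ nextTerm ⊥ W i ≤ U i ∧ U i ≤ stepCore T (W i)} := by
    ext U
    refine Iff.trans ?_ forall_and.symm
    exact and_congr_left fun hWU => ⟨And.left, hWU.right_mem_stepChains⟩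
  rw [hset, ncard_setOf_forall fun i (S : Submodule F V) =>
    finrank F S = u i ∧ nextTerm ⊥ W i ≤ S ∧ S ≤ stepCore T (W i)]
  refine Finset.prod_congr rfl fun i _ => ?_
  have hnext := finrank_nextTerm hW.1 i
  rw [ncard_finrank_eq_and_le_and_le (hW.2 i) (hnext.trans_le (hau i)), hnext]

lemma ncard_stepLinked_left {a u : Fin r → ℕ} (hau : a ≤ prevTerm (finrank F V) u)
    {U : Fin r → Submodule F V} (hU : U ∈ stepChains T u) :
    {W | W ∈ stepChains T a ∧ StepLinked T W U}.ncard =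
      ∏ i, gaussNat (Fintype.card F)
        (prevTerm (finrank F V) u i - (2 * u i - finrank F (stepCore T (U i))))
        (prevTerm (finrank F V) u i - a i) := by
  have hset : {W | W ∈ stepChains T a ∧ StepLinked T W U} =
      {W | ∀ i, finrank F (W i) = a i ∧ stepHull T (U i) ≤ W i ∧ W i ≤ prevTerm ⊤ U i} := by
    ext W
    refine Iff.trans ?_ forall_and.symm
    exact (and_congr_left fun hWU => ⟨And.left, hWU.left_mem_stepChains⟩).trans
      (and_congr_right fun _ => stepLinked_iff)
  rw [hset, ncard_setOf_forall fun i (S : Submodule F V) =>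
    finrank F S = a i ∧ stepHull T (U i) ≤ S ∧ S ≤ prevTerm ⊤ U i]
  refine Finset.prod_congr rfl fun i _ => ?_
  have hprev := finrank_prevTerm hU.1 i
  rw [ncard_finrank_eq_and_le_and_le_of_le_finrank (forall_nextTerm_le_stepCore_iff.mp hU.2 i)
    ((hau i).trans_eq hprev.symm), hprev,
    ← hU.1 i, ← finrank_stepHull_add_finrank_stepCore T (U i), Nat.add_sub_cancel]

lemma sum_ncard_tupleSet_mul_eq {a u : Fin r → ℕ} (haN : ∀ i, a i ≤ finrank F V)
    (hau : nextTerm 0 a ≤ u) :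
    ∑ b ∈ Finset.Icc (nextTerm 0 a) a, (tupleSet T r fun i => (a i, b i)).ncard *
        ∏ i, gaussNat (Fintype.card F) (b i - nextTerm 0 a i) (u i - nextTerm 0 a i) =
      ∑ v ∈ Finset.Icc (nextTerm 0 u) u, (tupleSet T r fun i => (u i, v i)).ncard *
        ∏ i, gaussNat (Fintype.card F) (prevTerm (finrank F V) u i - (2 * u i - v i))
          (prevTerm (finrank F V) u i - a i) := by
  have : Finite V := Module.finite_of_finite F
  simp only [tupleSet_eq]
  exact sum_ncard_fiber_mul_eq (StepLinked T) (fun _ => finrank_stepCore_mem_Icc)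
    (fun _ => finrank_stepCore_mem_Icc) _ _ (fun _ => ncard_stepLinked_right hau)
    (fun _ => ncard_stepLinked_left (le_prevTerm_of_nextTerm_le haN hau))

end SubspaceChains

section ProductIdentity

variable (q : ℕ)

lemma sum_Icc_prod_gaussNat {ι : Type*} [Fintype ι] [DecidableEq ι] {c d : ι → ℕ} (hcd : c ≤ d)
    {x y : ι → ℕ} (z : ι → ℕ) (hxy : ∀ i, x i ≤ d i - c i ∨ y i ≤ d i - c i) :
    ∑ j ∈ Finset.Icc c d, ∏ i, gaussNat q (y i) (d i - j i) * gaussNat q (x i) (d i - j i) *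
        q ^ (d i - j i) ^ 2 * gaussNat q (x i - (d i - j i)) (z i) =
      ∏ i, gaussNat q (x i) (z i) * gaussNat q (x i - z i + y i) (y i) := by
  rw [Pi.Icc_eq, ← Finset.prod_univ_sum (fun i => Finset.Icc (c i) (d i)) fun i j =>
    gaussNat q (y i) (d i - j) * gaussNat q (x i) (d i - j) * q ^ (d i - j) ^ 2 *
      gaussNat q (x i - (d i - j)) (z i)]
  refine Finset.prod_congr rfl fun i _ => ?_
  rw [← sum_gaussNat_mul_gaussNat_mul_gaussNat_sub q (x i) (y i) (z i) (d i - c i + 1)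
      ((hxy i).imp Nat.lt_succ_of_le Nat.lt_succ_of_le),
    ← Finset.Ico_add_one_right_eq_Icc, Finset.sum_Ico_reflect (fun m => gaussNat q (y i) m *
      gaussNat q (x i) m * q ^ m ^ 2 * gaussNat q (x i - m) (z i)) (c i) le_rfl,
    Nat.sub_self, Nat.Ico_zero_eq_range, Nat.sub_add_comm (hcd i)]

variable {r : ℕ}

/-- The value `∏ᵢ [aᵢ₋₁ - aᵢ, aᵢ - bᵢ]_q [aᵢ - aᵢ₊₁, aᵢ - bᵢ]_q q^{(aᵢ - bᵢ)²}` of the number of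
tuples with dimensions `a` and `b`, where `a₀ = N` and `a_{r+1} = 0`. The second factor is
`[aᵢ - aᵢ₊₁, bᵢ - aᵢ₊₁]_q` by the symmetry of Gaussian binomials. -/
def tupleCount (N : ℕ) (a b : Fin r → ℕ) : ℕ :=
  ∏ i, gaussNat q (prevTerm N a i - a i) (a i - b i) *
    gaussNat q (a i - nextTerm 0 a i) (a i - b i) * q ^ (a i - b i) ^ 2

lemma tupleCount_self (N : ℕ) (a : Fin r → ℕ) : tupleCount q N a a = 1 :=
  Finset.prod_eq_one fun i _ => by simp [gaussNat_zero_right]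

lemma gaussNat_mul_gaussNat_mul_qFactorial_div {a u na nu pa pu : ℕ} (hua : u ≤ a) (hna : na ≤ u)
    (hnu : nu ≤ u) (hpa : a ≤ pa) (hpu : a ≤ pu) :
    (gaussNat q (a - na) (u - na) * gaussNat q (pa - u) (pa - a) : ℚ) *
        (qFactorial q (pa - a) * qFactorial q (pu - u) /
          (qFactorial q (pu - a) * qFactorial q (pa - u))) =
      gaussNat q (pu - u) (pu - a) * gaussNat q (a - nu) (u - nu) *
        (qFactorial q (a - na) * qFactorial q (u - nu) /
          (qFactorial q (u - na) * qFactorial q (a - nu))) := by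
  rw [gaussNat_eq_div q (by lia : u - na ≤ a - na), gaussNat_eq_div q (by lia : pa - a ≤ pa - u),
    gaussNat_eq_div q (by lia : pu - a ≤ pu - u), gaussNat_eq_div q (by lia : u - nu ≤ a - nu),
    Nat.sub_sub_sub_cancel_right hna, Nat.sub_sub_sub_cancel_right hnu,
    show pa - u - (pa - a) = a - u by lia, show pu - u - (pu - a) = a - u by lia]
  have hne := qFactorial_cast_ne_zero q
  field_simp [hne]

/-- The quotient of the two sides telescopes: the `i`-th factor on the left divided by the one on
the right is `ρ (i + 1) / ρ i`, where `ρ` is a quotient of `q`-factorials equal to `1` at both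
ends. -/
lemma prod_gaussNat_mul_gaussNat_eq {N : ℕ} {a u : Fin r → ℕ} (ha : ∀ i, a i ≤ N)
    (hau : nextTerm 0 a ≤ u) (hua : u ≤ a) :
    ∏ i, gaussNat q (a i - nextTerm 0 a i) (u i - nextTerm 0 a i) *
        gaussNat q (prevTerm N a i - u i) (prevTerm N a i - a i) =
      ∏ i, gaussNat q (prevTerm N u i - u i) (prevTerm N u i - a i) *
        gaussNat q (a i - nextTerm 0 u i) (u i - nextTerm 0 u i) := by
  let gap (x y : Fin r → ℕ) (k : Fin (r + 1)) : ℚ := qFactorial q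
    ((Fin.cons N x : Fin (r + 1) → ℕ) k - (Fin.snoc y 0 : Fin (r + 1) → ℕ) k)
  let ρ (k : Fin (r + 1)) : ℚ := gap a a k * gap u u k / (gap u a k * gap a u k)
  have hgap (x y : Fin r → ℕ) (k : Fin (r + 1)) : gap x y k ≠ 0 := qFactorial_cast_ne_zero q _
  have hρ_ne (k : Fin (r + 1)) : ρ k ≠ 0 :=
    div_ne_zero (mul_ne_zero (hgap _ _ _) (hgap _ _ _)) (mul_ne_zero (hgap _ _ _) (hgap _ _ _))
  have hρ_zero : ρ 0 = 1 := div_self (mul_ne_zero (hgap u a 0) (hgap a u 0))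
  have hρ_last : ρ (Fin.last r) = 1 := by
    simp only [ρ, gap, Fin.snoc_last]
    exact (div_eq_one_iff_eq (mul_ne_zero (qFactorial_cast_ne_zero q _)
      (qFactorial_cast_ne_zero q _))).mpr (mul_comm _ _)
  have hρ : ∏ i : Fin r, ρ i.castSucc = ∏ i : Fin r, ρ i.succ := by
    rw [← mul_one (∏ i : Fin r, ρ i.castSucc), ← hρ_last, ← Fin.prod_univ_castSucc,
      Fin.prod_univ_succ, hρ_zero, one_mul]
  have hfactor (i : Fin r) :
      (gaussNat q (a i - nextTerm 0 a i) (u i - nextTerm 0 a i) *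
        gaussNat q (prevTerm N a i - u i) (prevTerm N a i - a i) : ℚ) * ρ i.castSucc =
      gaussNat q (prevTerm N u i - u i) (prevTerm N u i - a i) *
        gaussNat q (a i - nextTerm 0 u i) (u i - nextTerm 0 u i) * ρ i.succ := by
    simp only [ρ, gap, Fin.snoc_castSucc, Fin.cons_succ]
    exact gaussNat_mul_gaussNat_mul_qFactorial_div q (hua i) (hau i)
      ((nextTerm_mono 0 hua i).trans (hau i)) (le_prevTerm_of_nextTerm_le ha (hau.trans hua) i)
      (le_prevTerm_of_nextTerm_le ha hau i)
  rw [← Nat.cast_inj (R := ℚ)]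
  push_cast
  have hρ_prod_ne : ∏ i : Fin r, ρ i.succ ≠ 0 := Finset.prod_ne_zero_iff.mpr fun i _ => hρ_ne i.succ
  refine mul_right_cancel₀ hρ_prod_ne ?_
  nth_rw 1 [← hρ]
  rw [← Finset.prod_mul_distrib, ← Finset.prod_mul_distrib]
  exact Finset.prod_congr rfl fun i _ => hfactor i

lemma sum_tupleCount_mul_prod_gaussNat_sub_nextTerm {N : ℕ} {a u : Fin r → ℕ}
    (ha : ∀ i, a i ≤ N) (hau : nextTerm 0 a ≤ u) (hua : u ≤ a) :
    ∑ b ∈ Finset.Icc (nextTerm 0 a) a, tupleCount q N a b *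
        ∏ i, gaussNat q (b i - nextTerm 0 a i) (u i - nextTerm 0 a i) =
      ∏ i, gaussNat q (a i - nextTerm 0 a i) (u i - nextTerm 0 a i) *
        gaussNat q (prevTerm N a i - u i) (prevTerm N a i - a i) := by
  calc _ = ∑ b ∈ Finset.Icc (nextTerm 0 a) a, ∏ i,
          gaussNat q (prevTerm N a i - a i) (a i - b i) *
            gaussNat q (a i - nextTerm 0 a i) (a i - b i) * q ^ (a i - b i) ^ 2 *
            gaussNat q (a i - nextTerm 0 a i - (a i - b i)) (u i - nextTerm 0 a i) := by
        refine Finset.sum_congr rfl fun b hb => ?_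
        rw [tupleCount, ← Finset.prod_mul_distrib]
        refine Finset.prod_congr rfl fun i _ => ?_
        have := (Finset.mem_Icc.mp hb).2 i
        rw [show a i - nextTerm 0 a i - (a i - b i) = b i - nextTerm 0 a i by lia]
    _ = ∏ i, gaussNat q (a i - nextTerm 0 a i) (u i - nextTerm 0 a i) *
          gaussNat q (a i - nextTerm 0 a i - (u i - nextTerm 0 a i) + (prevTerm N a i - a i))
            (prevTerm N a i - a i) :=
        sum_Icc_prod_gaussNat q (hau.trans hua) _ fun i => Or.inl le_rfl
    _ = _ := by
        refine Finset.prod_congr rfl fun i _ => ?_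
        have := hau i
        have := hua i
        have := le_prevTerm_of_nextTerm_le ha (hau.trans hua) i
        rw [show a i - nextTerm 0 a i - (u i - nextTerm 0 a i) + (prevTerm N a i - a i) =
          prevTerm N a i - u i by lia]

lemma sum_tupleCount_mul_prod_gaussNat_prevTerm_sub {N : ℕ} {a u : Fin r → ℕ}
    (ha : ∀ i, a i ≤ N) (hau : nextTerm 0 a ≤ u) (hua : u ≤ a) :
    ∑ v ∈ Finset.Icc (nextTerm 0 u) u, tupleCount q N u v *
        ∏ i, gaussNat q (prevTerm N u i - (2 * u i - v i)) (prevTerm N u i - a i) =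
      ∏ i, gaussNat q (prevTerm N u i - u i) (prevTerm N u i - a i) *
        gaussNat q (a i - nextTerm 0 u i) (u i - nextTerm 0 u i) := by
  have hnu : nextTerm 0 u ≤ u := (nextTerm_mono 0 hua).trans hau
  calc _ = ∑ v ∈ Finset.Icc (nextTerm 0 u) u, ∏ i,
          gaussNat q (u i - nextTerm 0 u i) (u i - v i) *
            gaussNat q (prevTerm N u i - u i) (u i - v i) * q ^ (u i - v i) ^ 2 *
            gaussNat q (prevTerm N u i - u i - (u i - v i)) (prevTerm N u i - a i) := by
        refine Finset.sum_congr rfl fun v hv => ?_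
        rw [tupleCount, ← Finset.prod_mul_distrib]
        refine Finset.prod_congr rfl fun i _ => ?_
        have := (Finset.mem_Icc.mp hv).2 i
        rw [show prevTerm N u i - u i - (u i - v i) = prevTerm N u i - (2 * u i - v i) by lia,
          mul_comm (gaussNat q (u i - nextTerm 0 u i) _)]
    _ = ∏ i, gaussNat q (prevTerm N u i - u i) (prevTerm N u i - a i) *
          gaussNat q (prevTerm N u i - u i - (prevTerm N u i - a i) + (u i - nextTerm 0 u i))
            (u i - nextTerm 0 u i) :=
        sum_Icc_prod_gaussNat q hnu _ fun i => Or.inr le_rfl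
    _ = _ := by
        refine Finset.prod_congr rfl fun i _ => ?_
        have := hnu i
        have := hua i
        have := le_prevTerm_of_nextTerm_le ha hau i
        rw [show prevTerm N u i - u i - (prevTerm N u i - a i) + (u i - nextTerm 0 u i) =
          a i - nextTerm 0 u i by lia]

end ProductIdentity

section TriangularSystem

lemma eq_of_sum_mul_eq_of_triangular {α : Type*} [PartialOrder α] {s : Finset α} {f g : α → ℕ}
    {K : α → α → ℕ} (hdiag : ∀ u ∈ s, K u u ≠ 0) (htri : ∀ b ∈ s, ∀ u ∈ s, ¬ u ≤ b → K b u = 0)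
    (h : ∀ u ∈ s, f u = g u ∨ ∑ b ∈ s, f b * K b u = ∑ b ∈ s, g b * K b u) :
    ∀ u ∈ s, f u = g u := by
  classical
  by_contra! hne
  obtain ⟨w, hws, hwne⟩ := hne
  obtain ⟨u, hu, hmax⟩ := (s.filter fun u => f u ≠ g u).exists_maximal
    ⟨w, Finset.mem_filter.mpr ⟨hws, hwne⟩⟩
  obtain ⟨hus, hfg⟩ := Finset.mem_filter.mp hu
  have hoff : ∑ b ∈ s.erase u, f b * K b u = ∑ b ∈ s.erase u, g b * K b u := by
    refine Finset.sum_congr rfl fun b hb => ?_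
    obtain ⟨hbu, hbs⟩ := Finset.mem_erase.mp hb
    by_cases hub : u ≤ b
    · have hb_eq : f b = g b := by
        by_contra hb_ne
        exact hbu (le_antisymm (hmax (Finset.mem_filter.mpr ⟨hbs, hb_ne⟩) hub) hub)
      rw [hb_eq]
    · rw [htri b hbs u hus hub, mul_zero, mul_zero]
  have hsum := (h u hus).resolve_left hfg
  rw [← Finset.add_sum_erase s _ hus, ← Finset.add_sum_erase s _ hus, hoff] at hsum
  exact hfg (Nat.eq_of_mul_eq_mul_right (Nat.pos_of_ne_zero (hdiag u hus))
    (Nat.add_right_cancel hsum))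

end TriangularSystem

section InvariantFlag

open Module Submodule

variable {F V : Type*} [Field F] [AddCommGroup V] [Module F V] {T : V →ₗ[F] V}

lemma le_of_isChain_of_finrank_le [FiniteDimensional F V] {s : Set (Submodule F V)}
    (hs : IsChain (· ≤ ·) s) {U W : Submodule F V} (hU : U ∈ s) (hW : W ∈ s)
    (h : finrank F U ≤ finrank F W) : U ≤ W :=
  (hs.total hU hW).elim id fun hWU =>
    (eq_of_le_of_finrank_eq hWU (le_antisymm (finrank_mono hWU) h)).ge

lemma finrank_stepCore_eq_iff [FiniteDimensional F V] {W : Submodule F V} :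
    finrank F (stepCore T W) = finrank F W ↔ W ∈ Module.End.invtSubmodule T :=
  ⟨fun h => inf_eq_left.mp (eq_of_le_of_finrank_eq (inf_le_left : stepCore T W ≤ W) h),
    fun h => congrArg (fun U : Submodule F V => finrank F U) (inf_eq_left.mpr h)⟩

variable {r : ℕ}

lemma ncard_tupleSet_self [FiniteDimensional F V]
    (hchain : IsChain (· ≤ ·) (Module.End.invtSubmodule T : Set (Submodule F V)))
    (hdim : ∀ d ≤ finrank F V, ∃ W ∈ Module.End.invtSubmodule T, finrank F W = d)
    {a : Fin r → ℕ} (ha : ∀ i, a i ≤ finrank F V) (hna : nextTerm 0 a ≤ a) :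
    (tupleSet T r fun i => (a i, a i)).ncard = 1 := by
  choose W hW hWa using fun i => hdim (a i) (ha i)
  refine Set.ncard_eq_one.mpr ⟨W, ?_⟩
  rw [tupleSet_eq]
  refine Set.eq_singleton_iff_unique_mem.mpr ⟨⟨⟨hWa, fun i => ?_⟩, ?_⟩, fun U hU => ?_⟩
  · rw [stepCore, inf_eq_left.mpr (hW i)]
    exact le_of_isChain_of_finrank_le hchain
      (nextTerm_rec (Module.End.invtSubmodule.bot_mem T) hW i) (hW i)
      ((finrank_nextTerm hWa i).trans_le ((hna i).trans_eq (hWa i).symm))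
  · exact funext fun i => (finrank_stepCore_eq_iff.mpr (hW i)).trans (hWa i)
  · funext i
    have hUi : U i ∈ Module.End.invtSubmodule T :=
      finrank_stepCore_eq_iff.mp ((congrFun hU.2 i).trans (hU.1.1 i).symm)
    have hdim_eq : finrank F (U i) = finrank F (W i) := (hU.1.1 i).trans (hWa i).symm
    exact le_antisymm (le_of_isChain_of_finrank_le hchain hUi (hW i) hdim_eq.le)
      (le_of_isChain_of_finrank_le hchain (hW i) hUi hdim_eq.ge)

lemma prod_gaussNat_sub_eq_zero (q : ℕ) {b c u : Fin r → ℕ} (hcb : c ≤ b) (h : ¬ u ≤ b) :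
    ∏ i, gaussNat q (b i - c i) (u i - c i) = 0 := by
  obtain ⟨i, hi⟩ := not_forall.mp h
  have := hcb i
  exact Finset.prod_eq_zero (Finset.mem_univ i) (gaussNat_eq_zero_of_lt q (by lia))

theorem ncard_tupleSet_eq_tupleCount [FiniteDimensional F V] [Fintype F]
    (hchain : IsChain (· ≤ ·) (Module.End.invtSubmodule T : Set (Submodule F V)))
    (hdim : ∀ d ≤ finrank F V, ∃ W ∈ Module.End.invtSubmodule T, finrank F W = d)
    {a : Fin r → ℕ} (ha : ∀ i, a i ≤ finrank F V) :
    ∀ b ∈ Finset.Icc (nextTerm 0 a) a, (tupleSet T r fun i => (a i, b i)).ncard =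
      tupleCount (Fintype.card F) (finrank F V) a b := by
  induction a using WellFoundedLT.induction with
  | ind a ih =>
  refine eq_of_sum_mul_eq_of_triangular
    (K := fun b u => ∏ i, gaussNat (Fintype.card F) (b i - nextTerm 0 a i) (u i - nextTerm 0 a i))
    (fun u _ => ?_)
    (fun b hb _ _ => prod_gaussNat_sub_eq_zero _ (Finset.mem_Icc.mp hb).1) fun u hu => ?_
  · simp only [gaussNat_self, Finset.prod_const_one, ne_eq, one_ne_zero, not_false_eq_true]
  obtain ⟨hau, hua⟩ := Finset.mem_Icc.mp hu
  rcases hua.eq_or_lt with rfl | hlt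
  · left
    rw [ncard_tupleSet_self hchain hdim ha hau, tupleCount_self]
  · right
    rw [sum_ncard_tupleSet_mul_eq ha hau,
      sum_tupleCount_mul_prod_gaussNat_sub_nextTerm _ ha hau hua,
      prod_gaussNat_mul_gaussNat_eq _ ha hau hua,
      ← sum_tupleCount_mul_prod_gaussNat_prevTerm_sub _ ha hau hua]
    refine Finset.sum_congr rfl fun v hv => ?_
    rw [ih u hlt (fun i => (hua i).trans (ha i)) v hv]

end InvariantFlag

section CyclicNilpotent

open Module Submodule LinearMap

variable {F V : Type*} [Field F] [AddCommGroup V] [Module F V] {T : V →ₗ[F] V}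

lemma ker_pow_mem_invtSubmodule (T : V →ₗ[F] V) (d : ℕ) :
    ker (T ^ d) ∈ Module.End.invtSubmodule T := by
  intro x hx
  rw [mem_ker] at hx
  rw [mem_comap, mem_ker, ← Module.End.mul_apply, ← pow_succ, pow_succ', Module.End.mul_apply, hx,
    map_zero]

variable [FiniteDimensional F V]

lemma card_le_finrank_of_linearIndependent_of_mem {ι : Type*} [Fintype ι] {v : ι → V}
    (hv : LinearIndependent F v) {W : Submodule F V} (hvW : ∀ i, v i ∈ W) :
    Fintype.card ι ≤ finrank F W := by
  have hW : LinearIndependent F fun i => (⟨v i, hvW i⟩ : W) :=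
    (W.subtype.linearIndependent_iff W.ker_subtype).mp hv
  exact hW.fintype_card_le_finrank

lemma finrank_ker_pow_of_isCyclicOp (hcyc : IsCyclicOp T) (hnil : T ^ finrank F V = 0) {d : ℕ}
    (hd : d ≤ finrank F V) : finrank F (ker (T ^ d)) = d := by
  obtain ⟨v, hv⟩ := hcyc
  have hli : LinearIndependent F fun i : Fin (finrank F V) => (T ^ (i : ℕ)) v :=
    linearIndependent_of_top_le_span_of_card_eq_finrank hv.ge (Fintype.card_fin _)
  have hker : d ≤ finrank F (ker (T ^ d)) := by
    have hsub := hli.comp (fun i : Fin d => ⟨finrank F V - d + i, by lia⟩)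
      fun i j hij => Fin.ext (Nat.add_left_cancel (Fin.ext_iff.mp hij))
    refine (Fintype.card_fin d).ge.trans (card_le_finrank_of_linearIndependent_of_mem hsub ?_)
    intro i
    rw [mem_ker, Function.comp_apply, ← Module.End.mul_apply, ← pow_add,
      show d + (finrank F V - d + i) = i + finrank F V by lia, pow_add, hnil, mul_zero,
      LinearMap.zero_apply]
  have hrange : finrank F V - d ≤ finrank F (range (T ^ d)) := by
    have hsub := hli.comp (fun i : Fin (finrank F V - d) => ⟨d + i, by lia⟩)
      fun i j hij => Fin.ext (Nat.add_left_cancel (Fin.ext_iff.mp hij))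
    refine (Fintype.card_fin _).ge.trans (card_le_finrank_of_linearIndependent_of_mem hsub ?_)
    intro i
    rw [Function.comp_apply, pow_add, Module.End.mul_apply]
    exact mem_range_self _ _
  have hrank := finrank_range_add_finrank_ker (T ^ d)
  lia

lemma le_ker_pow_finrank_of_mem_invtSubmodule (hnil : IsNilpotent T) {W : Submodule F V}
    (hW : W ∈ Module.End.invtSubmodule T) : W ≤ ker (T ^ finrank F W) := by
  obtain ⟨n, hn⟩ := hnil
  intro w hw
  have hrestrict : (T.restrict hW) ^ n = 0 := by
    rw [Module.End.pow_restrict n hW]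
    ext x
    simp [hn]
  have hw_ker : (⟨w, hw⟩ : W) ∈ ker ((T.restrict hW) ^ finrank F W) :=
    Module.End.ker_pow_le_ker_pow_finrank _ n (by simp [hrestrict])
  rw [Module.End.pow_restrict (finrank F W) hW] at hw_ker
  exact congrArg Subtype.val hw_ker

lemma isChain_invtSubmodule_of_isCyclicOp (hcyc : IsCyclicOp T) (hnil : T ^ finrank F V = 0) :
    IsChain (· ≤ ·) (Module.End.invtSubmodule T : Set (Submodule F V)) := by
  have heq {W : Submodule F V} (hW : W ∈ Module.End.invtSubmodule T) :
      W = ker (T ^ finrank F W) :=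
    eq_of_le_of_finrank_eq (le_ker_pow_finrank_of_mem_invtSubmodule ⟨_, hnil⟩ hW)
      (finrank_ker_pow_of_isCyclicOp hcyc hnil (finrank_le W)).symm
  intro U hU W hW _
  rw [heq hU, heq hW]
  exact (le_total (finrank F U) (finrank F W)).imp
    (fun h => T.iterateKer.monotone h) fun h => T.iterateKer.monotone h

lemma exists_mem_invtSubmodule_finrank_eq (hcyc : IsCyclicOp T) (hnil : T ^ finrank F V = 0)
    {d : ℕ} (hd : d ≤ finrank F V) : ∃ W ∈ Module.End.invtSubmodule T, finrank F W = d :=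
  ⟨ker (T ^ d), ker_pow_mem_invtSubmodule T d, finrank_ker_pow_of_isCyclicOp hcyc hnil hd⟩

end CyclicNilpotent

theorem tupleSet_ncard_cyclic_nilpotent_general (F V : Type*) [Field F] [Fintype F]
    [AddCommGroup V] [Module F V] [FiniteDimensional F V]
    (N : ℕ) (hN : Module.finrank F V = N) (T : V →ₗ[F] V)
    (hchain : IsChain (· ≤ ·) (Module.End.invtSubmodule T : Set (Submodule F V)))
    (hdim : ∀ d ≤ N, ∃ W ∈ Module.End.invtSubmodule T, Module.finrank F W = d)
    (r : ℕ) (a : ℕ → ℕ × ℕ)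
    (h0 : a 0 = (N, N)) (hlast : a (r + 1) = (0, 0))
    (h1 : ∀ i, 1 ≤ i → i ≤ r → (a i).2 ≤ (a i).1)
    (h2 : ∀ i, i ≤ r → (a (i + 1)).1 ≤ (a i).2) :
    Set.ncard (tupleSet T r (fun i => a ((i : ℕ) + 1))) =
      ∏ i : Fin r,
        gaussZ (Fintype.card F)
            (((a (i : ℕ)).1 : ℤ) - ((a ((i : ℕ) + 1)).1 : ℤ))
            (((a ((i : ℕ) + 1)).1 : ℤ) - ((a ((i : ℕ) + 1)).2 : ℤ)) *
        gaussZ (Fintype.card F)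
            (((a ((i : ℕ) + 1)).1 : ℤ) - ((a ((i : ℕ) + 2)).1 : ℤ))
            (((a ((i : ℕ) + 1)).2 : ℤ) - ((a ((i : ℕ) + 2)).1 : ℤ)) *
        Fintype.card F ^ (((a ((i : ℕ) + 1)).1 - (a ((i : ℕ) + 1)).2) ^ 2) := by
  subst hN
  have hba (i : ℕ) (hi : i ≤ r) : (a i).2 ≤ (a i).1 := by
    rcases i.eq_zero_or_pos with rfl | hpos
    exacts [by rw [h0], h1 i hpos hi]
  have hstep (i : ℕ) (hi : i ≤ r) : (a (i + 1)).1 ≤ (a i).1 := (h2 i hi).trans (hba i hi)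
  have hprev := prevTerm_shift (r := r) fun n => (a n).1
  have hnext := nextTerm_shift (r := r) fun n => (a n).1
  simp only [h0, hlast] at hprev hnext
  have haN (i : ℕ) (hi : i ≤ r) : (a i).1 ≤ Module.finrank F V := by
    induction i with
    | zero => rw [h0]
    | succ i ih => exact (hstep i (by lia)).trans (ih (by lia))
  refine (ncard_tupleSet_eq_tupleCount hchain hdim (fun i : Fin r => haN (i + 1) (by lia))
    (fun i => (a (i + 1)).2) (Finset.mem_Icc.mpr ⟨fun i => ?_, fun i => ?_⟩)).trans ?_
  · exact (hnext i).trans_le (h2 _ (by lia))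
  · exact hba _ (by lia)
  refine Finset.prod_congr rfl fun i _ => ?_
  have hba_i := hba (i + 1) (by lia)
  have hnb_i : (a (i + 2)).1 ≤ (a (i + 1)).2 := h2 (i + 1) (by lia)
  rw [hprev, hnext, gaussZ_natCast_sub _ (hstep i (by lia)) hba_i,
    gaussZ_natCast_sub _ (hnb_i.trans hba_i) hnb_i]
  rw [← gaussNat_symm _ (Nat.sub_le_sub_right hba_i _), Nat.sub_sub_sub_cancel_right hnb_i]

/-- for a cyclic nilpotent operator `T` on an `N`-dimensional space,
with `a 0 = (N,N) ≥ a 1 ≥ ⋯ ≥ a r ≥ a (r+1) = (0,0)` (coordinatewise chain),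
`|[(a₁,₁,a₁,₂),…,(a_r,₁,a_r,₂)]_T| =
∏ᵢ [aᵢ₋₁,₁ − aᵢ,₁, aᵢ,₁ − aᵢ,₂]_q [aᵢ,₁ − aᵢ₊₁,₁, aᵢ,₂ − aᵢ₊₁,₁]_q q^{(aᵢ,₁−aᵢ,₂)²}`. -/
theorem tupleSet_ncard_cyclic_nilpotent (F V : Type*) [Field F] [Fintype F]
    [AddCommGroup V] [Module F V] [FiniteDimensional F V]
    (N : ℕ) (hN : Module.finrank F V = N)
    (T : V →ₗ[F] V) (hcyc : IsCyclicOp T) (hnil : T ^ N = 0)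
    (r : ℕ) (a : ℕ → ℕ × ℕ)
    (h0 : a 0 = (N, N)) (hlast : a (r + 1) = (0, 0))
    (h1 : ∀ i, 1 ≤ i → i ≤ r → (a i).2 ≤ (a i).1)
    (h2 : ∀ i, i ≤ r → (a (i + 1)).1 ≤ (a i).2) :
    Set.ncard (tupleSet T r (fun i => a ((i : ℕ) + 1))) =
      ∏ i : Fin r,
        gaussZ (Fintype.card F)
            (((a (i : ℕ)).1 : ℤ) - ((a ((i : ℕ) + 1)).1 : ℤ))
            (((a ((i : ℕ) + 1)).1 : ℤ) - ((a ((i : ℕ) + 1)).2 : ℤ)) *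
        gaussZ (Fintype.card F)
            (((a ((i : ℕ) + 1)).1 : ℤ) - ((a ((i : ℕ) + 2)).1 : ℤ))
            (((a ((i : ℕ) + 1)).2 : ℤ) - ((a ((i : ℕ) + 2)).1 : ℤ)) *
        Fintype.card F ^ (((a ((i : ℕ) + 1)).1 - (a ((i : ℕ) + 1)).2) ^ 2) := by
  subst hN
  exact tupleSet_ncard_cyclic_nilpotent_general F V _ rfl T
    (isChain_invtSubmodule_of_isCyclicOp hcyc hnil)
    (fun _ => exists_mem_invtSubmodule_finrank_eq hcyc hnil) r a h0 hlast h1 h2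
end

section
/- Let T be a linear operator on an md-dimensional vector space V over F_q, where m, d are positive integers. If T is cyclic and its minimal polynomial is (x − c)^{md} for some c ∈ F_q (i.e., T is cyclic and p-primary for a linear polynomial p), then σ(m,d;T) = q^{m^2(d−1)}. -/
/-- `W` is an `m`-dimensional `T`-splitting subspace: `V = W ⊕ TW ⊕ ⋯ ⊕ T^{d-1}W`. -/
def IsSplittingSubspace {F V : Type*} [Field F] [AddCommGroup V] [Module F V]
    (T : V →ₗ[F] V) (m d : ℕ) (W : Submodule F V) : Prop :=
  Module.finrank F W = m ∧
  iSupIndep (fun i : Fin d => W.map (T ^ (i : ℕ))) ∧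
  (⨆ i : Fin d, W.map (T ^ (i : ℕ))) = ⊤

/-- `σ(m,d;T)`, the number of `m`-dimensional `T`-splitting subspaces. -/
noncomputable def splitCount {F V : Type*} [Field F] [AddCommGroup V] [Module F V]
    (T : V →ₗ[F] V) (m d : ℕ) : ℕ :=
  Set.ncard {W : Submodule F V | IsSplittingSubspace T m d W}

/-!
Framing a splitting subspace by a map `h : F^m → V` turns it into the embedding
`(x₀, …, x_{d-1}) ↦ ∑ T^j (h x_j)` of `(F^m)^d` in `V`, which carries the partial map
`(x, 0) ↦ (0, x)` to a restriction of `T`; every embedding with this property arises in this way.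
The partial map leaves no nonzero subspace invariant, and subtracting `c` from it and from `T`
preserves this while replacing `T` by the nilpotent operator `N = T - c`, which is a single Jordan
block because `T` is cyclic.

Let `U ⊆ M`. The number of embeddings `φ` of a partial map `g : U → M` without nonzero invariant
subspaces in a nilpotent Jordan block `N` on `V`, with `dim M = dim V = n`, depends only on `q`, `n`
and `k = dim U`, and equals `∏_{k ≤ i < n} (q^n - q^i)`. Indeed, let `l` be a functional with kernel
`range N`. Then `μ = l ∘ φ` is a nonzero functional that vanishes on `range g`, and `φ` restricts to
an embedding `ker μ → range N` for the induced partial map, so induction on `n` applies once the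
extensions of each restriction have been counted.
-/

open Module LinearMap

theorem ncard_eq_ncard_mul_of_fiber {α β : Type*} [Finite α] [Finite β] {s : Set α} {t : Set β}
    {c : ℕ} (f : α → β) (hf : Set.MapsTo f s t) (hc : ∀ b ∈ t, {a ∈ s | f a = b}.ncard = c) :
    s.ncard = t.ncard * c := by
  classical
  have := Fintype.ofFinite α
  have := Fintype.ofFinite β
  have hmaps : Set.MapsTo f (s.toFinset : Set α) (t.toFinset : Set β) := by simpa using hf
  rw [Set.ncard_eq_toFinset_card', Set.ncard_eq_toFinset_card',
    Finset.card_eq_sum_card_fiberwise hmaps]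
  refine Finset.sum_const_nat fun b hb => ?_
  rw [← hc b (Set.mem_toFinset.mp hb), Set.ncard_eq_toFinset_card']
  congr 1
  ext a
  simp

section LinearCounting

variable {F M U V : Type*} [Field F] [AddCommGroup M] [Module F M] [AddCommGroup U] [Module F U]
  [AddCommGroup V] [Module F V]

instance finite_linearMap [Finite F] [FiniteDimensional F M] [FiniteDimensional F V] :
    Finite (M →ₗ[F] V) :=
  Module.finite_of_finite F

theorem ncard_preimage_singleton_of_mem_range [FiniteDimensional F M] (L : M →ₗ[F] V) {y : V}
    (hy : y ∈ range L) : (L ⁻¹' {y}).ncard = Nat.card F ^ finrank F (ker L) := by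
  obtain ⟨x, rfl⟩ := hy
  have htranslate : L ⁻¹' {L x} = (x + ·) '' (ker L : Set M) := by
    ext z
    simp [eq_comm, add_comm, ← sub_eq_iff_eq_add]
  rw [htranslate, Set.ncard_image_of_injective _ (add_right_injective x),
    ← Module.natCard_eq_pow_finrank (K := F)]
  rfl

theorem ncard_dual_comp_eq [FiniteDimensional F M] {g : U →ₗ[F] M} (hg : Function.Injective g)
    (μ : Dual F U) :
    {l : Dual F M | l ∘ₗ g = μ}.ncard = Nat.card F ^ (finrank F M - finrank F U) := by
  have := FiniteDimensional.of_injective g hg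
  have hsurj : range g.dualMap = ⊤ := range_eq_top.mpr (dualMap_surjective_of_injective hg)
  have hker : finrank F (ker g.dualMap) = finrank F M - finrank F U := by
    have := finrank_range_add_finrank_ker g.dualMap
    rw [hsurj, finrank_top, Subspace.dual_finrank_eq, Subspace.dual_finrank_eq] at this
    omega
  rw [← hker, ← ncard_preimage_singleton_of_mem_range g.dualMap (hsurj ▸ Submodule.mem_top)]
  rfl

theorem eq_of_comp_ker_subtype_eq {l : Dual F M} {x : M} (hx : l x ≠ 0) {φ φ' : M →ₗ[F] V}
    (hker : φ ∘ₗ (ker l).subtype = φ' ∘ₗ (ker l).subtype) (hφx : φ x = φ' x) : φ = φ' := by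
  ext y
  have hmem : y - (l y / l x) • x ∈ ker l := by simp [hx]
  have := congr($hker ⟨_, hmem⟩)
  simpa [hφx] using this

theorem ncard_extensions_ker {l : Dual F M} {x : M} (hx : l x ≠ 0) (ψ : ker l →ₗ[F] V)
    (Y : Set V) :
    {φ : M →ₗ[F] V | φ ∘ₗ (ker l).subtype = ψ ∧ φ x ∈ Y}.ncard = Y.ncard := by
  refine Set.BijOn.ncard_eq (f := fun φ => φ x) ⟨fun φ hφ => hφ.2, ?_, fun y hy => ?_⟩
  · exact fun φ hφ φ' hφ' h => eq_of_comp_ker_subtype_eq hx (hφ.1.trans hφ'.1.symm) h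
  · obtain ⟨φ, hφ, rfl⟩ := exists_extend_of_notMem ψ (v := x) (by simpa using hx) y
    exact ⟨φ, ⟨hφ, hy⟩, rfl⟩

end LinearCounting

/-- The number of ways to complete `k` linearly independent vectors of an `n`-dimensional space
over the field with `q` elements to an ordered basis. -/
def completionCount (q k n : ℕ) : ℕ :=
  ∏ i ∈ Finset.Ico k n, (q ^ n - q ^ i)

theorem completionCount_add_add (q k n a : ℕ) :
    completionCount q (k + a) (n + a) = q ^ (a * (n - k)) * completionCount q k n := by
  simp_rw [completionCount, ← Finset.prod_Ico_add', pow_add, ← Nat.sub_mul,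
    Finset.prod_mul_distrib, Finset.prod_const, Nat.card_Ico, ← pow_mul, mul_comm]

theorem completionCount_succ (q : ℕ) {k n : ℕ} (hk : k ≤ n) :
    completionCount q k (n + 1) = (q ^ (n + 1 - k) - 1) * (q ^ n * completionCount q k n) := by
  have hsplit : completionCount q k (n + 1) =
      (q ^ (n + 1) - q ^ k) * completionCount q (k + 1) (n + 1) :=
    Finset.prod_eq_prod_Ico_succ_bot (by omega) _
  have hfactor : q ^ (n + 1) - q ^ k = q ^ k * (q ^ (n + 1 - k) - 1) := by
    rw [Nat.mul_sub, ← pow_add, mul_one, Nat.add_sub_of_le (by omega)]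
  have hpow : q ^ n = q ^ k * q ^ (n - k) := by rw [← pow_add, Nat.add_sub_of_le hk]
  rw [hsplit, hfactor, hpow, completionCount_add_add]
  ring

theorem completionCount_pos {q : ℕ} (hq : 1 < q) (k n : ℕ) : 0 < completionCount q k n :=
  Finset.prod_pos fun _ hi =>
    Nat.sub_pos_of_lt (Nat.pow_lt_pow_right hq (Finset.mem_Ico.mp hi).2)

section NilpotentBlock

variable {F V : Type*} [Field F] [AddCommGroup V] [Module F V]

/-- `N` is a single nilpotent Jordan block. The kernel is required to be at most a line, so that
the zero space is allowed; every nilpotent operator on a nonzero space has a nonzero kernel. -/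
structure IsNilpotentBlock (N : Module.End F V) : Prop where
  isNilpotent : IsNilpotent N
  finrank_ker_le_one : finrank F (ker N) ≤ 1

/-- The operator induced by `N` on its own range. -/
abbrev rangeRestriction (N : Module.End F V) : Module.End F (range N) :=
  N.restrict fun x _ => mem_range_self N x

theorem map_ker_rangeRestriction_le (N : Module.End F V) :
    (ker (rangeRestriction N)).map (range N).subtype ≤ ker N := by
  rintro _ ⟨x, hx, rfl⟩
  exact congr_arg Subtype.val hx

theorem ker_ne_bot_of_isNilpotent [Nontrivial V] {N : Module.End F V} (hN : IsNilpotent N) :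
    ker N ≠ ⊥ := fun hker => by
  obtain ⟨k, hk⟩ := hN
  obtain ⟨x, hx⟩ := exists_ne (0 : V)
  have hinj : Function.Injective (N ^ k) := by
    rw [Module.End.coe_pow]
    exact (ker_eq_bot.mp hker).iterate k
  exact hx (hinj (by simp [hk]))

theorem exists_dual_comp_rangeRestrict_eq {N : Module.End F V} {l : Dual F V}
    (hl : ker l = range N) (hker : ker N ≤ range N) :
    ∃ l' : Dual F (range N), ker l' = range (rangeRestriction N) ∧ l' ∘ₗ N.rangeRestrict = l := by
  have hmem : l ∈ range N.rangeRestrict.dualMap := by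
    rw [range_dualMap_eq_dualAnnihilator_ker, ker_rangeRestrict,
      Submodule.mem_dualAnnihilator]
    exact fun x hx => (hl ▸ hker) hx
  obtain ⟨l', hl'⟩ := hmem
  have hl'_apply (x : V) : l' (N.rangeRestrict x) = l x := congr($hl' x)
  refine ⟨l', ?_, hl'⟩
  ext ⟨_, x, rfl⟩
  have hmem_ker : x ∈ ker l ↔ x ∈ range N := by rw [hl]
  constructor
  · intro hx
    obtain ⟨z, rfl⟩ := hmem_ker.mp ((hl'_apply x).symm.trans hx)
    exact ⟨N.rangeRestrict z, rfl⟩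
  · rintro ⟨⟨_, z, rfl⟩, hz⟩
    rw [← hz]
    exact (hl'_apply (N z)).trans (hl.ge (mem_range_self N z))

namespace IsNilpotentBlock

variable {N : Module.End F V} [FiniteDimensional F V]

theorem rangeRestriction (hN : IsNilpotentBlock N) : IsNilpotentBlock (rangeRestriction N) where
  isNilpotent := Module.End.isNilpotent.restrict _ hN.isNilpotent
  finrank_ker_le_one := by
    rw [← Submodule.finrank_map_subtype_eq]
    exact (Submodule.finrank_mono (map_ker_rangeRestriction_le N)).trans hN.finrank_ker_le_one

theorem finrank_ker [Nontrivial V] (hN : IsNilpotentBlock N) : finrank F (ker N) = 1 :=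
  le_antisymm hN.finrank_ker_le_one
    (Submodule.one_le_finrank_iff.mpr (ker_ne_bot_of_isNilpotent hN.isNilpotent))

theorem finrank_range_add_one [Nontrivial V] (hN : IsNilpotentBlock N) :
    finrank F (range N) + 1 = finrank F V := by
  rw [← hN.finrank_ker, finrank_range_add_finrank_ker]

theorem ker_le_range [Nontrivial (range N)] (hN : IsNilpotentBlock N) : ker N ≤ range N := by
  have : Nontrivial V := (range N).subtype_injective.nontrivial
  have hker : (ker (_root_.rangeRestriction N)).map (range N).subtype = ker N := by
    refine Submodule.eq_of_le_of_finrank_eq (map_ker_rangeRestriction_le N) ?_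
    rw [Submodule.finrank_map_subtype_eq, hN.rangeRestriction.finrank_ker, hN.finrank_ker]
  exact hker ▸ Submodule.map_subtype_le _ _

theorem exists_dual_ker_eq_range [Nontrivial V] (hN : IsNilpotentBlock N) :
    ∃ l : Dual F V, ker l = range N := by
  have hrange := hN.finrank_range_add_one
  have hlt : range N < ⊤ := Submodule.lt_top_of_finrank_lt_finrank (by omega)
  obtain ⟨l, hl, hle⟩ := Submodule.exists_le_ker_of_lt_top _ hlt
  have hker := Dual.finrank_ker_add_one_of_ne_zero hl
  exact ⟨l, (Submodule.eq_of_le_of_finrank_eq hle (by omega)).symm⟩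

theorem dual_ne_zero_of_ker_eq_range [Nontrivial V] (hN : IsNilpotentBlock N) {l : Dual F V}
    (hl : ker l = range N) : l ≠ 0 := by
  rintro rfl
  have hrange := hN.finrank_range_add_one
  rw [← hl, ker_zero, finrank_top] at hrange
  omega

end IsNilpotentBlock

theorem IsCyclicOp.exists_span_singleton_sup_range_eq_top {T : Module.End F V}
    (hT : IsCyclicOp T) (c : F) :
    ∃ v : V, F ∙ v ⊔ range (T - algebraMap F (Module.End F V) c) = ⊤ := by
  obtain ⟨v, hv⟩ := hT
  have hpow (i : ℕ) : (T ^ i) v ∈ F ∙ v ⊔ range (T - algebraMap F (Module.End F V) c) := by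
    induction i with
    | zero => exact Submodule.mem_sup_left (Submodule.mem_span_singleton_self v)
    | succ i ih =>
      have hsucc : (T ^ (i + 1)) v =
          (T - algebraMap F (Module.End F V) c) ((T ^ i) v) + c • (T ^ i) v := by
        simp [pow_succ']
      rw [hsucc]
      exact add_mem (Submodule.mem_sup_right (mem_range_self _ _)) (Submodule.smul_mem _ c ih)
  refine ⟨v, top_le_iff.mp (hv.ge.trans (Submodule.span_le.mpr ?_))⟩
  rintro _ ⟨i, rfl⟩
  exact hpow i

variable [FiniteDimensional F V]

theorem IsCyclicOp.finrank_ker_sub_le_one {T : Module.End F V} (hT : IsCyclicOp T) (c : F) :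
    finrank F (ker (T - algebraMap F (Module.End F V) c)) ≤ 1 := by
  obtain ⟨v, hv⟩ := hT.exists_span_singleton_sup_range_eq_top c
  have hsup := Submodule.finrank_add_le_finrank_add_finrank (F ∙ v)
    (range (T - algebraMap F (Module.End F V) c))
  rw [hv, finrank_top] at hsup
  have hspan : finrank F (F ∙ v) ≤ 1 := by simpa using finrank_span_le_card ({v} : Set V)
  have hrank := finrank_range_add_finrank_ker (T - algebraMap F (Module.End F V) c)
  omega

theorem IsCyclicOp.isNilpotentBlock_sub {T : Module.End F V} (hT : IsCyclicOp T) {c : F} {n : ℕ}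
    (hmin : minpoly F T = (Polynomial.X - Polynomial.C c) ^ n) :
    IsNilpotentBlock (T - algebraMap F (Module.End F V) c) where
  isNilpotent := ⟨n, by simpa [hmin] using minpoly.aeval F T⟩
  finrank_ker_le_one := hT.finrank_ker_sub_le_one c

end NilpotentBlock

section SimplePencil

variable {F M U V : Type*} [Field F] [AddCommGroup M] [Module F M] [AddCommGroup U] [Module F U]
  [AddCommGroup V] [Module F V]

/-- A pair of maps `f, g : U → M` with `f` injective is a simple pencil if, regarding `U` as a
subspace of `M` along `f`, no nonzero subspace of `U` is invariant under the partial map `g`. -/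
structure IsSimplePencil (f g : U →ₗ[F] M) : Prop where
  injective_left : Function.Injective f
  eq_bot_of_map_le_map : ∀ K : Submodule F U, K.map g ≤ K.map f → K = ⊥

namespace IsSimplePencil

variable {f g : U →ₗ[F] M}

theorem injective_right (h : IsSimplePencil f g) : Function.Injective g := by
  refine ker_eq_bot.mp (h.eq_bot_of_map_le_map _ ?_)
  rintro _ ⟨x, hx, rfl⟩
  exact mem_ker.mp hx ▸ zero_mem _

theorem sub_smul (h : IsSimplePencil f g) (c : F) : IsSimplePencil f (g - c • f) where
  injective_left := h.injective_left
  eq_bot_of_map_le_map K hK := by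
    refine h.eq_bot_of_map_le_map K ?_
    rintro _ ⟨x, hx, rfl⟩
    have hsub : g x = (g - c • f) x + f (c • x) := by simp
    rw [hsub]
    exact add_mem (hK (Submodule.mem_map_of_mem hx))
      (Submodule.mem_map_of_mem (K.smul_mem c hx))

theorem restrict (h : IsSimplePencil f g) {K : Submodule F U} {H : Submodule F M}
    (hf : ∀ x ∈ K, f x ∈ H) (hg : ∀ x ∈ K, g x ∈ H) :
    IsSimplePencil (f.restrict hf) (g.restrict hg) where
  injective_left x y hxy := Subtype.ext (h.injective_left congr(($hxy : M)))
  eq_bot_of_map_le_map L hL := by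
    refine Submodule.map_injective_of_injective K.subtype_injective
      ((h.eq_bot_of_map_le_map _ ?_).trans (Submodule.map_bot _).symm)
    rintro _ ⟨_, ⟨x, hx, rfl⟩, rfl⟩
    obtain ⟨y, hy, hyx⟩ := hL (Submodule.mem_map_of_mem hx)
    exact ⟨y, Submodule.mem_map_of_mem hy, congr(($hyx : M))⟩

theorem finrank_lt [FiniteDimensional F M] [Nontrivial M] (h : IsSimplePencil f g) :
    finrank F U < finrank F M := by
  have := FiniteDimensional.of_injective f h.injective_left
  refine lt_of_le_of_ne (finrank_le_finrank_of_injective h.injective_left) fun heq => ?_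
  have hsurj := (injective_iff_surjective_of_finrank_eq_finrank heq).mp h.injective_left
  have htop : (⊤ : Submodule F U) = ⊥ :=
    h.eq_bot_of_map_le_map ⊤ (by rw [Submodule.map_top f, range_eq_top.mpr hsurj]; exact le_top)
  have hU : finrank F U = 0 := by rw [← finrank_top F U, htop, finrank_bot]
  exact finrank_pos.ne' (heq.symm.trans hU)

end IsSimplePencil

/-- The injective maps `φ : M → V` that turn the partial map `g` (relative to `f`) into a
restriction of the operator `T`. -/
def intertwiningEmbeddings (f g : U →ₗ[F] M) (T : Module.End F V) : Set (M →ₗ[F] V) :=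
  {φ | Function.Injective φ ∧ φ ∘ₗ g = T ∘ₗ φ ∘ₗ f}

theorem intertwiningEmbeddings_sub_smul (f g : U →ₗ[F] M) (T : Module.End F V) (c : F) :
    intertwiningEmbeddings f (g - c • f) (T - algebraMap F (Module.End F V) c) =
      intertwiningEmbeddings f g T := by
  ext φ
  simp [intertwiningEmbeddings, LinearMap.ext_iff]

theorem ncard_intertwiningEmbeddings_of_finrank_eq_zero [FiniteDimensional F M]
    [FiniteDimensional F V] (hM : finrank F M = 0) (hV : finrank F V = 0) (f g : U →ₗ[F] M)
    (T : Module.End F V) :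
    (intertwiningEmbeddings f g T).ncard = completionCount (Nat.card F) (finrank F U) 0 := by
  have := finrank_zero_iff.mp hM
  have := finrank_zero_iff.mp hV
  have hzero : intertwiningEmbeddings f g T = {0} :=
    Set.eq_singleton_iff_unique_mem.mpr
      ⟨⟨Function.injective_of_subsingleton _, Subsingleton.elim _ _⟩,
        fun _ _ => Subsingleton.elim _ _⟩
  simp [hzero, completionCount]

/-- The embeddings `φ` whose composite with a fixed functional `l` on `V` is the functional `μ`
on `M`. -/
def markedEmbeddings (f g : U →ₗ[F] M) (T : Module.End F V) (l : Dual F V) (μ : Dual F M) :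
    Set (M →ₗ[F] V) :=
  {φ ∈ intertwiningEmbeddings f g T | l ∘ₗ φ = μ}

variable {f g : U →ₗ[F] M} {N : Module.End F V} {l : Dual F V} {μ : Dual F M}

/-- The left half of the pencil that `(f, g)` induces from the vectors which `f` sends into the
hyperplane `ker μ` to that hyperplane. -/
abbrev kerPencilLeft (f : U →ₗ[F] M) (μ : Dual F M) : ker (μ ∘ₗ f) →ₗ[F] ker μ :=
  f.restrict fun _ hx => hx

/-- The right half of the pencil induced on the hyperplane `ker μ`, which contains the range of
`g`. -/
abbrev kerPencilRight (f : U →ₗ[F] M) (hμ : ∀ u, g u ∈ ker μ) : ker (μ ∘ₗ f) →ₗ[F] ker μ :=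
  g.restrict fun x _ => hμ x

theorem IsSimplePencil.kerPencil (h : IsSimplePencil f g) (hμ : ∀ u, g u ∈ ker μ) :
    IsSimplePencil (kerPencilLeft f μ) (kerPencilRight f hμ) :=
  h.restrict _ _

section Restriction

variable {φ : M →ₗ[F] V} {ψ : ker μ →ₗ[F] range N}

theorem exists_restriction_of_comp_eq (hl : ker l = range N) (hφ : l ∘ₗ φ = μ) :
    ∃ ψ : ker μ →ₗ[F] range N, φ ∘ₗ (ker μ).subtype = (range N).subtype ∘ₗ ψ := by
  refine ⟨φ.restrict fun x hx => ?_, rfl⟩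
  rw [← hl, mem_ker, ← hx, ← hφ, comp_apply]

theorem comp_eq_of_restriction (hl : ker l = range N)
    (hψ : φ ∘ₗ (ker μ).subtype = (range N).subtype ∘ₗ ψ) {x : M} (hx : μ x ≠ 0)
    (hφx : l (φ x) = μ x) : l ∘ₗ φ = μ := by
  refine eq_of_comp_ker_subtype_eq hx (LinearMap.ext fun y => ?_) hφx
  have hy : φ y = ψ y := congr($hψ y)
  have hmem : (ψ y : V) ∈ ker l := hl.ge (ψ y).2
  simp only [comp_apply, Submodule.subtype_apply, hy]
  exact hmem.trans y.2.symm

theorem injective_of_restriction (hφ : l ∘ₗ φ = μ)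
    (hψ : φ ∘ₗ (ker μ).subtype = (range N).subtype ∘ₗ ψ) (hinj : Function.Injective ψ) :
    Function.Injective φ := by
  refine (injective_iff_map_eq_zero φ).mpr fun x hx => ?_
  have hxμ : x ∈ ker μ := by simp [← hφ, hx]
  have hψx : ψ ⟨x, hxμ⟩ = 0 := Subtype.ext ((congr($hψ ⟨x, hxμ⟩)).symm.trans hx)
  exact congr_arg Subtype.val ((injective_iff_map_eq_zero ψ).mp hinj _ hψx)

theorem intertwines_ker_iff (hμ : ∀ u, g u ∈ ker μ)
    (hψ : φ ∘ₗ (ker μ).subtype = (range N).subtype ∘ₗ ψ) :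
    ψ ∘ₗ kerPencilRight f hμ = rangeRestriction N ∘ₗ ψ ∘ₗ kerPencilLeft f μ ↔
      (φ ∘ₗ g) ∘ₗ (ker (μ ∘ₗ f)).subtype = (N ∘ₗ φ ∘ₗ f) ∘ₗ (ker (μ ∘ₗ f)).subtype := by
  have hψ_apply (y : ker μ) : φ y = ψ y := congr($hψ y)
  simp only [LinearMap.ext_iff, Subtype.ext_iff]
  refine forall_congr' fun u => ?_
  rw [show ((ψ ∘ₗ kerPencilRight f hμ) u : V) = ψ (kerPencilRight f hμ u) from rfl, ← hψ_apply]
  rw [show ((rangeRestriction N ∘ₗ ψ ∘ₗ kerPencilLeft f μ) u : V) =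
    N (ψ (kerPencilLeft f μ u)) from rfl, ← hψ_apply]
  rfl

theorem restriction_mem_intertwiningEmbeddings (hμ : ∀ u, g u ∈ ker μ)
    (hψ : φ ∘ₗ (ker μ).subtype = (range N).subtype ∘ₗ ψ) (hφ : φ ∈ intertwiningEmbeddings f g N) :
    ψ ∈ intertwiningEmbeddings (kerPencilLeft f μ) (kerPencilRight f hμ) (rangeRestriction N) := by
  refine ⟨?_, (intertwines_ker_iff hμ hψ).mpr (by rw [hφ.2])⟩
  refine Function.Injective.of_comp (f := (range N).subtype) ?_
  rw [← coe_comp, ← hψ]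
  exact hφ.1.comp (ker μ).subtype_injective

end Restriction

theorem ncard_eq_ncard_mul_of_restriction [Finite F] [FiniteDimensional F M] [FiniteDimensional F V]
    {E : Set (M →ₗ[F] V)} {S : Set (ker μ →ₗ[F] range N)} {c : ℕ}
    (hres : ∀ φ ∈ E, ∃ ψ ∈ S, φ ∘ₗ (ker μ).subtype = (range N).subtype ∘ₗ ψ)
    (hfib : ∀ ψ ∈ S, {φ ∈ E | φ ∘ₗ (ker μ).subtype = (range N).subtype ∘ₗ ψ}.ncard = c) :
    E.ncard = S.ncard * c := by
  have hinj : Function.Injective fun ψ : ker μ →ₗ[F] range N => (range N).subtype ∘ₗ ψ :=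
    fun ψ ψ' h => (cancel_left (range N).subtype_injective).mp h
  rw [← Set.ncard_image_of_injective S hinj]
  refine ncard_eq_ncard_mul_of_fiber (fun φ => φ ∘ₗ (ker μ).subtype) (fun φ hφ => ?_) ?_
  · obtain ⟨ψ, hψ, h⟩ := hres φ hφ
    exact ⟨ψ, hψ, h.symm⟩
  · rintro _ ⟨ψ, hψ, rfl⟩
    exact hfib ψ hψ

/-- The intertwining condition is inherited from `ker μ`, so the value of `φ` at a vector outside
this hyperplane is only constrained by `l`. -/
theorem ncard_markedEmbeddings_of_comp_left_eq_zero [Finite F] [FiniteDimensional F M]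
    [FiniteDimensional F V] (hl : ker l = range N) (hl₀ : l ≠ 0) (hμ₀ : μ ≠ 0)
    (hμ : ∀ u, g u ∈ ker μ) (hμf : μ ∘ₗ f = 0) :
    (markedEmbeddings f g N l μ).ncard =
      (intertwiningEmbeddings (kerPencilLeft f μ) (kerPencilRight f hμ)
        (rangeRestriction N)).ncard * Nat.card F ^ finrank F (range N) := by
  obtain ⟨x, hx⟩ : ∃ x, μ x ≠ 0 := DFunLike.ne_iff.mp hμ₀
  refine ncard_eq_ncard_mul_of_restriction (fun φ hφ => ?_) fun ψ hψ => ?_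
  · obtain ⟨ψ, hψ⟩ := exists_restriction_of_comp_eq hl hφ.2
    exact ⟨ψ, restriction_mem_intertwiningEmbeddings hμ hψ hφ.1, hψ⟩
  · have hfin : finrank F (range N) = finrank F (ker l) := by rw [hl]
    rw [hfin, ← ncard_preimage_singleton_of_mem_range l (y := μ x)
        (Dual.range_eq_top_of_ne_zero hl₀ ▸ Submodule.mem_top),
      ← ncard_extensions_ker hx ((range N).subtype ∘ₗ ψ)]
    congr 1
    ext φ
    constructor
    · rintro ⟨hφ, hres⟩
      exact ⟨hres, congr($(hφ.2) x)⟩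
    · rintro ⟨hres, hφx⟩
      have hlφ := comp_eq_of_restriction hl hres hx hφx
      refine ⟨⟨⟨injective_of_restriction hlφ hres hψ.1, LinearMap.ext fun u => ?_⟩, hlφ⟩, hres⟩
      exact DFunLike.congr_fun ((intertwines_ker_iff hμ hres).mp hψ.2)
        ⟨u, DFunLike.congr_fun hμf u⟩

/-- The intertwining condition at `u` prescribes the image under `N` of the value of `φ` at
`f u`, a vector outside `ker μ`. -/
theorem ncard_markedEmbeddings_of_comp_left_ne_zero [Finite F] [FiniteDimensional F M]
    [FiniteDimensional F V] (hl : ker l = range N) {l' : Dual F (range N)}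
    (hl' : l' ∘ₗ N.rangeRestrict = l) (hμ : ∀ u, g u ∈ ker μ) (hμf : μ ∘ₗ f ≠ 0) :
    (markedEmbeddings f g N l μ).ncard =
      {ψ ∈ intertwiningEmbeddings (kerPencilLeft f μ) (kerPencilRight f hμ) (rangeRestriction N) |
        (l' ∘ₗ ψ) ∘ₗ g.codRestrict (ker μ) hμ = μ ∘ₗ f}.ncard *
      Nat.card F ^ finrank F (ker N) := by
  obtain ⟨u, hu⟩ : ∃ u, μ (f u) ≠ 0 := DFunLike.ne_iff.mp hμf
  have hl'_apply (x : V) (y : range N) (hxy : N x = y) : l' y = l x := by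
    rw [← hl', comp_apply]
    exact congr_arg l' (Subtype.ext hxy.symm)
  refine ncard_eq_ncard_mul_of_restriction (fun φ hφ => ?_) fun ψ hψ => ?_
  · obtain ⟨ψ, hψ⟩ := exists_restriction_of_comp_eq hl hφ.2
    refine ⟨ψ, ⟨restriction_mem_intertwiningEmbeddings hμ hψ hφ.1, LinearMap.ext fun w => ?_⟩, hψ⟩
    refine (hl'_apply (φ (f w)) _ ?_).trans congr($(hφ.2) (f w))
    exact (congr($(hφ.1.2) w)).symm.trans congr($hψ ⟨g w, hμ w⟩)
  · set y : range N := ψ ⟨g u, hμ u⟩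
    rw [← ncard_preimage_singleton_of_mem_range N y.2,
      ← ncard_extensions_ker hu ((range N).subtype ∘ₗ ψ)]
    congr 1
    ext φ
    constructor
    · rintro ⟨hφ, hres⟩
      exact ⟨hres, (congr($(hφ.1.2) u)).symm.trans congr($hres ⟨g u, hμ u⟩)⟩
    · rintro ⟨hres, hφu⟩
      have hlφ := comp_eq_of_restriction hl hres hu
        ((hl'_apply _ y hφu).symm.trans congr($(hψ.2) u))
      refine ⟨⟨⟨injective_of_restriction hlφ hres hψ.1.1, ?_⟩, hlφ⟩, hres⟩
      exact eq_of_comp_ker_subtype_eq (l := μ ∘ₗ f) hu ((intertwines_ker_iff hμ hres).mp hψ.1.2)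
        ((congr($hres ⟨g u, hμ u⟩)).trans hφu.symm)

theorem ncard_intertwiningEmbeddings_of_markedEmbeddings [Finite F] [FiniteDimensional F M]
    [FiniteDimensional F V] {n : ℕ} (h : IsSimplePencil f g) (hM : finrank F M = n + 1)
    (hV : finrank F V = n + 1) (hl : ker l = range N)
    (hl₀ : l ≠ 0) (hmarked : ∀ μ : Dual F M, μ ≠ 0 → (∀ u, g u ∈ ker μ) →
      (markedEmbeddings f g N l μ).ncard =
        Nat.card F ^ n * completionCount (Nat.card F) (finrank F U) n) :
    (intertwiningEmbeddings f g N).ncard =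
      completionCount (Nat.card F) (finrank F U) (n + 1) := by
  have := nontrivial_of_finrank_pos (R := F) (M := M) (by omega)
  have hU : finrank F U < n + 1 := hM ▸ h.finrank_lt
  have hfunctionals : ({μ : Dual F M | μ ∘ₗ g = 0} \ {0}).ncard =
      Nat.card F ^ (n + 1 - finrank F U) - 1 := by
    have hzero : (0 : Dual F M) ∈ {μ : Dual F M | μ ∘ₗ g = 0} := zero_comp g
    rw [Set.ncard_sdiff_singleton_of_mem hzero, ncard_dual_comp_eq h.injective_right, hM]
  have hmaps : Set.MapsTo (fun φ : M →ₗ[F] V => l ∘ₗ φ) (intertwiningEmbeddings f g N)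
      ({μ : Dual F M | μ ∘ₗ g = 0} \ {0}) := by
    refine fun φ hφ => ⟨LinearMap.ext fun u => ?_, fun hlφ => hl₀ (LinearMap.ext fun y => ?_)⟩
    · exact (congr_arg l congr($(hφ.2) u)).trans (hl.ge (mem_range_self N _))
    · obtain ⟨x, rfl⟩ := (injective_iff_surjective_of_finrank_eq_finrank
        (hM.trans hV.symm)).mp hφ.1 y
      exact DFunLike.congr_fun hlφ x
  rw [ncard_eq_ncard_mul_of_fiber _ hmaps fun μ hμ =>
    hmarked μ hμ.2 (DFunLike.congr_fun hμ.1), hfunctionals,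
    completionCount_succ _ (Nat.lt_succ_iff.mp hU)]

theorem ncard_intertwiningEmbeddings_kerPencil_of_markedEmbeddings [Finite F]
    [FiniteDimensional F M] [FiniteDimensional F V] {n c : ℕ} (h : IsSimplePencil f g)
    (hM : finrank F M = n + 1) (hμ : ∀ u, g u ∈ ker μ) (hμf : μ ∘ₗ f ≠ 0) (l' : Dual F (range N))
    (hmarked : ∀ μ' : Dual F (ker μ), μ' ≠ 0 → (∀ u, kerPencilRight f hμ u ∈ ker μ') →
      (markedEmbeddings (kerPencilLeft f μ) (kerPencilRight f hμ) (rangeRestriction N)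
        l' μ').ncard = c) :
    {ψ ∈ intertwiningEmbeddings (kerPencilLeft f μ) (kerPencilRight f hμ) (rangeRestriction N) |
      (l' ∘ₗ ψ) ∘ₗ g.codRestrict (ker μ) hμ = μ ∘ₗ f}.ncard =
    Nat.card F ^ (n - finrank F U) * c := by
  have hμ₀ : μ ≠ 0 := fun hμ₀ => hμf (by rw [hμ₀, zero_comp])
  have hker := Dual.finrank_ker_add_one_of_ne_zero hμ₀
  have hinj : Function.Injective (g.codRestrict (ker μ) hμ) := fun x y hxy =>
    h.injective_right congr(($hxy : M))
  rw [show n = finrank F (ker μ) by omega, ← ncard_dual_comp_eq hinj (μ ∘ₗ f)]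
  refine ncard_eq_ncard_mul_of_fiber (fun ψ => l' ∘ₗ ψ) (fun ψ hψ => hψ.2) fun μ' hμ' => ?_
  have hμ'₀ : μ' ≠ 0 := fun hμ'₀ => hμf (hμ'.symm.trans (by rw [hμ'₀, zero_comp]))
  have hμ'g (u : ker (μ ∘ₗ f)) : kerPencilRight f hμ u ∈ ker μ' :=
    congr($hμ' (u : U)).trans u.2
  rw [← hmarked μ' hμ'₀ hμ'g]
  congr 1
  ext ψ
  constructor
  · rintro ⟨⟨hψ, -⟩, hlψ⟩
    exact ⟨hψ, hlψ⟩
  · rintro ⟨hψ, rfl⟩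
    exact ⟨⟨hψ, hμ'⟩, rfl⟩

theorem ncard_markedEmbeddings_of_intertwiningEmbeddings_kerPencil [Finite F]
    [FiniteDimensional F M] [FiniteDimensional F V] {n : ℕ} (hrange : finrank F (range N) = n)
    (hl : ker l = range N) (hl₀ : l ≠ 0) (hμ₀ : μ ≠ 0) (hμ : ∀ u, g u ∈ ker μ)
    (hμf : μ ∘ₗ f = 0)
    (hcount : (intertwiningEmbeddings (kerPencilLeft f μ) (kerPencilRight f hμ)
      (rangeRestriction N)).ncard =
        completionCount (Nat.card F) (finrank F (ker (μ ∘ₗ f))) n) :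
    (markedEmbeddings f g N l μ).ncard =
      Nat.card F ^ n * completionCount (Nat.card F) (finrank F U) n := by
  rw [ncard_markedEmbeddings_of_comp_left_eq_zero hl hl₀ hμ₀ hμ hμf, hcount, hrange, hμf, ker_zero,
    finrank_top, mul_comm]

theorem ncard_markedEmbeddings_of_markedEmbeddings_kerPencil [Finite F]
    [FiniteDimensional F M] [FiniteDimensional F V] {n : ℕ} (h : IsSimplePencil f g)
    (hM : finrank F M = n + 2) (hker : finrank F (ker N) = 1) (hl : ker l = range N)
    {l' : Dual F (range N)} (hl' : l' ∘ₗ N.rangeRestrict = l) (hμ : ∀ u, g u ∈ ker μ)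
    (hμf : μ ∘ₗ f ≠ 0)
    (hmarked : ∀ μ' : Dual F (ker μ), μ' ≠ 0 → (∀ u, kerPencilRight f hμ u ∈ ker μ') →
      (markedEmbeddings (kerPencilLeft f μ) (kerPencilRight f hμ) (rangeRestriction N)
        l' μ').ncard =
          Nat.card F ^ n * completionCount (Nat.card F) (finrank F (ker (μ ∘ₗ f))) n) :
    (markedEmbeddings f g N l μ).ncard =
      Nat.card F ^ (n + 1) * completionCount (Nat.card F) (finrank F U) (n + 1) := by
  have := FiniteDimensional.of_injective f h.injective_left
  rw [ncard_markedEmbeddings_of_comp_left_ne_zero hl hl' hμ hμf,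
    ncard_intertwiningEmbeddings_kerPencil_of_markedEmbeddings h hM hμ hμf l' hmarked, hker,
    ← Dual.finrank_ker_add_one_of_ne_zero hμf, Nat.add_sub_add_right,
    completionCount_add_add]
  ring

theorem ncard_markedEmbeddings [Finite F] [FiniteDimensional F M] [FiniteDimensional F V] {n : ℕ}
    (h : IsSimplePencil f g) (hN : IsNilpotentBlock N) (hM : finrank F M = n + 1)
    (hV : finrank F V = n + 1) (hl : ker l = range N) (hμ₀ : μ ≠ 0) (hμ : ∀ u, g u ∈ ker μ) :
    (markedEmbeddings f g N l μ).ncard =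
      Nat.card F ^ n * completionCount (Nat.card F) (finrank F U) n := by
  induction n generalizing M U V with
  | zero =>
    have := nontrivial_of_finrank_pos (R := F) (M := M) (by omega)
    have := nontrivial_of_finrank_pos (R := F) (M := V) (by omega)
    have := FiniteDimensional.of_injective f h.injective_left
    have hU : Subsingleton U := finrank_zero_iff.mp (Nat.lt_one_iff.mp (hM ▸ h.finrank_lt))
    have hkerμ : finrank F (ker μ) = 0 := by
      have := Dual.finrank_ker_add_one_of_ne_zero hμ₀
      omega
    have hrange : finrank F (range N) = 0 := by
      have := hN.finrank_range_add_one
      omega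
    exact ncard_markedEmbeddings_of_intertwiningEmbeddings_kerPencil hrange hl
      (hN.dual_ne_zero_of_ker_eq_range hl) hμ₀ hμ (Subsingleton.elim _ _)
      (ncard_intertwiningEmbeddings_of_finrank_eq_zero hkerμ hrange _ _ _)
  | succ n ih =>
    have := nontrivial_of_finrank_pos (R := F) (M := V) (by omega)
    have hkerμ : finrank F (ker μ) = n + 1 := by
      have := Dual.finrank_ker_add_one_of_ne_zero hμ₀
      omega
    have hrange : finrank F (range N) = n + 1 := by
      have := hN.finrank_range_add_one
      omega
    have := nontrivial_of_finrank_pos (R := F) (M := range N) (by omega)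
    obtain ⟨l', hl', hl'N⟩ := exists_dual_comp_rangeRestrict_eq hl hN.ker_le_range
    have hmarked (μ' : Dual F (ker μ)) (hμ'₀ : μ' ≠ 0)
        (hμ' : ∀ u, kerPencilRight f hμ u ∈ ker μ') :=
      ih (h.kerPencil hμ) hN.rangeRestriction hkerμ hrange hl' hμ'₀ hμ'
    by_cases hμf : μ ∘ₗ f = 0
    · exact ncard_markedEmbeddings_of_intertwiningEmbeddings_kerPencil hrange hl
        (hN.dual_ne_zero_of_ker_eq_range hl) hμ₀ hμ hμf
        (ncard_intertwiningEmbeddings_of_markedEmbeddings (h.kerPencil hμ) hkerμ hrange hl'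
          (hN.rangeRestriction.dual_ne_zero_of_ker_eq_range hl') hmarked)
    · exact ncard_markedEmbeddings_of_markedEmbeddings_kerPencil h hM hN.finrank_ker hl hl'N hμ
        hμf hmarked

theorem ncard_intertwiningEmbeddings_of_isNilpotentBlock [Finite F] [FiniteDimensional F M]
    [FiniteDimensional F V] (h : IsSimplePencil f g) (hN : IsNilpotentBlock N)
    (hMV : finrank F M = finrank F V) :
    (intertwiningEmbeddings f g N).ncard =
      completionCount (Nat.card F) (finrank F U) (finrank F V) := by
  rcases hV : finrank F V with _ | n
  · exact ncard_intertwiningEmbeddings_of_finrank_eq_zero (hMV.trans hV) hV f g N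
  · have := nontrivial_of_finrank_pos (R := F) (M := V) (by omega)
    obtain ⟨l, hl⟩ := hN.exists_dual_ker_eq_range
    exact ncard_intertwiningEmbeddings_of_markedEmbeddings h (hMV.trans hV) hV hl
      (hN.dual_ne_zero_of_ker_eq_range hl)
      fun μ hμ₀ hμ => ncard_markedEmbeddings h hN (hMV.trans hV) hV hl hμ₀ hμ

end SimplePencil

section ShiftPencil

variable {F E V : Type*} [Field F] [AddCommGroup E] [Module F E] [AddCommGroup V] [Module F V]

variable (F E) in
/-- The embedding of `E^e` in `E^(e+1)` along the first `e` coordinates, `x ↦ (x, 0)`: the left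
half of the shift pencil. -/
def appendZero (e : ℕ) : (Fin e → E) →ₗ[F] (Fin (e + 1) → E) :=
  LinearMap.pi (Fin.snoc (α := fun _ => (Fin e → E) →ₗ[F] E) proj 0)

variable (F E) in
/-- The embedding of `E^e` in `E^(e+1)` along the last `e` coordinates, `x ↦ (0, x)`: the right
half of the shift pencil. -/
def prependZero (e : ℕ) : (Fin e → E) →ₗ[F] (Fin (e + 1) → E) :=
  LinearMap.pi (Fin.cons (α := fun _ => (Fin e → E) →ₗ[F] E) 0 proj)

@[simp] theorem appendZero_castSucc {e : ℕ} (x : Fin e → E) (i : Fin e) :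
    appendZero F E e x i.castSucc = x i := by
  simp [appendZero]

@[simp] theorem appendZero_last {e : ℕ} (x : Fin e → E) :
    appendZero F E e x (Fin.last e) = 0 := by
  simp [appendZero]

@[simp] theorem prependZero_zero {e : ℕ} (x : Fin e → E) : prependZero F E e x 0 = 0 :=
  rfl

@[simp] theorem prependZero_succ {e : ℕ} (x : Fin e → E) (i : Fin e) :
    prependZero F E e x i.succ = x i :=
  rfl

theorem appendZero_single {e : ℕ} (i : Fin e) (w : E) :
    appendZero F E e (Pi.single i w) = Pi.single i.castSucc w := by
  ext j
  cases j using Fin.lastCases with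
  | last => simp [(Fin.castSucc_lt_last i).ne']
  | cast j => simp [Pi.single_apply]

theorem prependZero_single {e : ℕ} (i : Fin e) (w : E) :
    prependZero F E e (Pi.single i w) = Pi.single i.succ w := by
  ext j
  cases j using Fin.cases with
  | zero => simp [(Fin.succ_ne_zero i).symm]
  | succ j => simp [Pi.single_apply]

/-- In a vector of an invariant subspace, the coordinates vanish successively from the last one
down. -/
theorem isSimplePencil_shift (e : ℕ) : IsSimplePencil (appendZero F E e) (prependZero F E e) where
  injective_left x y hxy := by
    ext i
    simpa using congr_fun hxy i.castSucc
  eq_bot_of_map_le_map K hK := by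
    have hcoord (j : Fin (e + 1)) : ∀ x ∈ K, appendZero F E e x j = 0 := by
      induction j using Fin.reverseInduction with
      | last => exact fun x _ => appendZero_last x
      | cast i ih =>
        intro x hx
        obtain ⟨y, hy, hyx⟩ := hK (Submodule.mem_map_of_mem hx)
        rw [appendZero_castSucc, ← prependZero_succ (F := F) x i, ← hyx]
        exact ih y hy
    refine (Submodule.eq_bot_iff K).mpr fun x hx => ?_
    ext i
    simpa using hcoord i.castSucc x hx

/-- The linear map `(x₀, …, x_{d-1}) ↦ ∑ T^j (h x_j)`. It is bijective exactly when
`h` is a frame (an injective parametrization) of a splitting subspace, its range. -/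
def krylovMap (T : Module.End F V) (d : ℕ) (h : E →ₗ[F] V) : (Fin d → E) →ₗ[F] V :=
  lsum F (fun _ => E) F fun j => (T ^ (j : ℕ)) ∘ₗ h

theorem krylovMap_apply (T : Module.End F V) {d : ℕ} (h : E →ₗ[F] V) (x : Fin d → E) :
    krylovMap T d h x = ∑ j : Fin d, (T ^ (j : ℕ)) (h (x j)) := by
  simp [krylovMap]

theorem krylovMap_comp_single (T : Module.End F V) {d : ℕ} (h : E →ₗ[F] V) (j : Fin d) :
    krylovMap T d h ∘ₗ single F (fun _ => E) j = (T ^ (j : ℕ)) ∘ₗ h :=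
  congr_fun ((lsum F (fun _ : Fin d => E) F).symm_apply_apply fun i => (T ^ (i : ℕ)) ∘ₗ h) j

theorem krylovMap_comp_single_zero (T : Module.End F V) {e : ℕ} (h : E →ₗ[F] V) :
    krylovMap T (e + 1) h ∘ₗ single F (fun _ => E) 0 = h :=
  krylovMap_comp_single T h 0

theorem krylovMap_injective (T : Module.End F V) (e : ℕ) :
    Function.Injective (krylovMap (E := E) T (e + 1)) := fun h h' heq => by
  rw [← krylovMap_comp_single_zero T h, heq, krylovMap_comp_single_zero]

theorem krylovMap_comp_prependZero (T : Module.End F V) (e : ℕ) (h : E →ₗ[F] V) :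
    krylovMap T (e + 1) h ∘ₗ prependZero F E e =
      T ∘ₗ krylovMap T (e + 1) h ∘ₗ appendZero F E e := by
  refine LinearMap.ext fun x => ?_
  calc krylovMap T (e + 1) h (prependZero F E e x)
      = ∑ i : Fin e, (T ^ (i + 1 : ℕ)) (h (x i)) := by
        simp [krylovMap_apply, Fin.sum_univ_succ]
    _ = T (krylovMap T (e + 1) h (appendZero F E e x)) := by
        simp [krylovMap_apply, Fin.sum_univ_castSucc, pow_succ']

theorem eq_krylovMap_of_comp_prependZero {T : Module.End F V} {e : ℕ}
    {φ : (Fin (e + 1) → E) →ₗ[F] V}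
    (hφ : φ ∘ₗ prependZero F E e = T ∘ₗ φ ∘ₗ appendZero F E e) :
    φ = krylovMap T (e + 1) (φ ∘ₗ single F (fun _ => E) 0) := by
  refine pi_ext' fun j => ?_
  rw [krylovMap_comp_single]
  induction j using Fin.induction with
  | zero => rfl
  | succ i ih =>
    ext w
    have hshift : φ (Pi.single i.succ w) = T (φ (Pi.single i.castSucc w)) := by
      simpa [prependZero_single, appendZero_single] using congr($hφ (Pi.single i w))
    have hi : φ (Pi.single i.castSucc w) = (T ^ (i : ℕ)) (φ (Pi.single 0 w)) := congr($ih w)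
    simp [hshift, hi, pow_succ']

theorem intertwiningEmbeddings_shift (T : Module.End F V) (e : ℕ) :
    intertwiningEmbeddings (appendZero F E e) (prependZero F E e) T =
      krylovMap T (e + 1) '' {h | Function.Injective (krylovMap T (e + 1) h)} := by
  ext φ
  constructor
  · rintro ⟨hinj, hφ⟩
    have hkrylov := eq_krylovMap_of_comp_prependZero hφ
    exact ⟨_, by rwa [Set.mem_ofPred_eq, ← hkrylov], hkrylov.symm⟩
  · rintro ⟨h, hinj, rfl⟩
    exact ⟨hinj, krylovMap_comp_prependZero T e h⟩

theorem range_krylovMap (T : Module.End F V) (d : ℕ) (h : E →ₗ[F] V) :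
    range (krylovMap T d h) = ⨆ i : Fin d, (range h).map (T ^ (i : ℕ)) := by
  rw [range_eq_map, ← iSup_range_single F (fun _ : Fin d => E), Submodule.map_iSup]
  simp_rw [← range_comp, krylovMap_comp_single]

theorem iSupIndep_range_single {ι : Type*} [DecidableEq ι] (M : ι → Type*)
    [∀ i, AddCommGroup (M i)] [∀ i, Module F (M i)] :
    iSupIndep fun i => range (single F M i) := by
  intro i
  simpa using disjoint_single_single F M {i} {i}ᶜ disjoint_compl_right

theorem injective_krylovMap_iff_isSplittingSubspace [FiniteDimensional F E]
    [FiniteDimensional F V] {e : ℕ} (hdim : finrank F V = finrank F E * (e + 1))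
    (T : Module.End F V) (h : E →ₗ[F] V) :
    Function.Injective (krylovMap T (e + 1) h) ↔
      IsSplittingSubspace T (finrank F E) (e + 1) (range h) := by
  have hsurj : Function.Injective (krylovMap T (e + 1) h) ↔
      Function.Surjective (krylovMap T (e + 1) h) :=
    injective_iff_surjective_of_finrank_eq_finrank (by
      simp [finrank_pi_fintype, hdim, mul_comm])
  constructor
  · intro hinj
    have hinj_h : Function.Injective h := by
      rw [← krylovMap_comp_single_zero T h (e := e)]
      exact hinj.comp (Pi.single_injective (M := fun _ => E) 0)
    refine ⟨finrank_range_of_inj hinj_h, ?_, ?_⟩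
    · have hindep := iSupIndep_map (krylovMap T (e + 1) h) hinj
        (iSupIndep_range_single (F := F) fun _ : Fin (e + 1) => E)
      simpa only [← range_comp, krylovMap_comp_single] using hindep
    · rw [← range_krylovMap, range_eq_top]
      exact hsurj.mp hinj
  · rintro ⟨-, -, hsup⟩
    rw [hsurj, ← range_eq_top, range_krylovMap, hsup]

theorem ncard_range_eq [Finite F] [FiniteDimensional F E]
    {W : Submodule F V} [FiniteDimensional F W] (hW : finrank F W = finrank F E) :
    {h : E →ₗ[F] V | range h = W}.ncard = completionCount (Nat.card F) 0 (finrank F E) := by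
  have := Fintype.ofFinite F
  have := Module.finite_of_finite F (M := W)
  let b := finBasis F E
  have hframes : {v : Fin (finrank F E) → W | LinearIndependent F v}.ncard =
      completionCount (Nat.card F) 0 (finrank F E) := by
    refine (card_linearIndependent hW.ge).trans ?_
    rw [hW, Nat.card_eq_fintype_card, completionCount, ← Finset.range_eq_Ico,
      Finset.prod_range]
  rw [← hframes]
  refine (Set.BijOn.ncard_eq (f := fun v => W.subtype ∘ₗ b.constr F v)
    ⟨fun v hv => ?_, fun v _ v' _ hvv' => ?_, fun h hh => ?_⟩).symm
  · have hspan := LinearIndependent.span_eq_top_of_card_eq_finrank' hv (by simp [hW])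
    simp [range_comp, b.constr_range, hspan]
  · exact (b.constr F).injective ((cancel_left W.subtype_injective).mp hvv')
  · subst hh
    refine ⟨h.rangeRestrict ∘ b, ?_, ?_⟩
    · have hinj : ker h.rangeRestrict = ⊥ :=
        ker_eq_bot.mpr ((injective_iff_surjective_of_finrank_eq_finrank hW.symm).mpr
          h.surjective_rangeRestrict)
      exact b.linearIndependent.map' h.rangeRestrict hinj
    · exact congr_arg ((range h).subtype ∘ₗ ·) (b.constr_self F h.rangeRestrict)

theorem ncard_injective_krylovMap [Finite F] [FiniteDimensional F E] [FiniteDimensional F V]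
    {e : ℕ} (hdim : finrank F V = finrank F E * (e + 1)) (T : Module.End F V) :
    {h : E →ₗ[F] V | Function.Injective (krylovMap T (e + 1) h)}.ncard =
      splitCount T (finrank F E) (e + 1) * completionCount (Nat.card F) 0 (finrank F E) := by
  have := Module.finite_of_finite F (M := V)
  have hframe := injective_krylovMap_iff_isSplittingSubspace hdim T
  refine ncard_eq_ncard_mul_of_fiber range (fun h => (hframe h).mp) fun W hW => ?_
  rw [← ncard_range_eq hW.1]
  congr 1
  ext h
  simp only [Set.mem_ofPred_eq, and_iff_right_iff_imp]
  rintro rfl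
  exact (hframe h).mpr hW

theorem splitCount_mul_completionCount [Finite F] [FiniteDimensional F V] {m e : ℕ}
    (hdim : finrank F V = m * (e + 1)) {T : Module.End F V} {c : F}
    (hT : IsNilpotentBlock (T - algebraMap F (Module.End F V) c)) :
    splitCount T m (e + 1) * completionCount (Nat.card F) 0 m =
      completionCount (Nat.card F) (m * e) (m * (e + 1)) := by
  have hE : finrank F (Fin m → F) = m := by simp
  have hcount := ncard_injective_krylovMap (E := Fin m → F) (by rwa [hE]) T
  rw [hE] at hcount
  calc splitCount T m (e + 1) * completionCount (Nat.card F) 0 m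
      = {h : (Fin m → F) →ₗ[F] V | Function.Injective (krylovMap T (e + 1) h)}.ncard :=
        hcount.symm
    _ = (intertwiningEmbeddings (appendZero F (Fin m → F) e) (prependZero F (Fin m → F) e)
          T).ncard := by
        rw [intertwiningEmbeddings_shift, Set.ncard_image_of_injective _ (krylovMap_injective T e)]
    _ = (intertwiningEmbeddings (appendZero F (Fin m → F) e)
          (prependZero F (Fin m → F) e - c • appendZero F (Fin m → F) e)
          (T - algebraMap F (Module.End F V) c)).ncard := by
        rw [intertwiningEmbeddings_sub_smul]
    _ = completionCount (Nat.card F) (finrank F (Fin e → Fin m → F)) (finrank F V) :=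
        ncard_intertwiningEmbeddings_of_isNilpotentBlock ((isSimplePencil_shift e).sub_smul c) hT
          (by simp [finrank_pi_fintype, hdim, mul_comm])
    _ = completionCount (Nat.card F) (m * e) (m * (e + 1)) := by
        simp [finrank_pi_fintype, hdim, mul_comm]

end ShiftPencil

/-- if `T` is cyclic with minimal polynomial `(x − c)^{md}` (cyclic and
primary for a linear polynomial), then `σ(m,d;T) = q^{m²(d−1)}`. -/
theorem splitCount_cyclic_linear_primary (F V : Type*) [Field F] [Fintype F]
    [AddCommGroup V] [Module F V] [FiniteDimensional F V]
    (m d : ℕ) (hm : 0 < m) (hd : 0 < d) (hdim : Module.finrank F V = m * d)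
    (T : V →ₗ[F] V) (hcyc : IsCyclicOp T) (c : F)
    (hmin : minpoly F (T : Module.End F V) = (Polynomial.X - Polynomial.C c) ^ (m * d)) :
    splitCount T m d = Fintype.card F ^ (m ^ 2 * (d - 1)) := by
  obtain ⟨e, rfl⟩ : ∃ e, d = e + 1 := Nat.exists_eq_add_one.mpr hd
  have hcount := splitCount_mul_completionCount hdim (hcyc.isNilpotentBlock_sub hmin)
  have hpower : completionCount (Nat.card F) (m * e) (m * (e + 1)) =
      Nat.card F ^ (m ^ 2 * e) * completionCount (Nat.card F) 0 m := by
    have hshift := completionCount_add_add (Nat.card F) 0 m (m * e)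
    rw [zero_add, Nat.sub_zero] at hshift
    rw [show m * (e + 1) = m + m * e by ring, show m ^ 2 * e = m * e * m by ring, hshift]
  have hpos : 0 < completionCount (Nat.card F) 0 m :=
    completionCount_pos Finite.one_lt_card 0 m
  rw [Nat.add_sub_cancel, ← Nat.card_eq_fintype_card]
  exact Nat.eq_of_mul_eq_mul_right hpos (hcount.trans hpower)
end

section
/- Let m, d be positive integers and q a prime power. The number of invertible md × md matrices M over F_q of the following form equals γ_m(q) · q^{m^2(d−1)}: there exist scalars a_{i,l} ∈ F_q for 1 ≤ i ≤ md, 1 ≤ l ≤ m such that for 0 ≤ j ≤ d−1 and 1 ≤ l ≤ m, the (jm + l)-th column of M has entries M_{i, jm+l} = a_{i−j, l} when i > j and M_{i, jm+l} = 0 when i ≤ j (i.e., each successive block of m columns is the first block of m columns shifted down by one row, with zeros filling the top). -/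
/-!
The columns of such a matrix are the coefficients of `X ^ j * f l` modulo `X ^ (m * d)`, for
`j < d` and `m` polynomials `f l`, so it is invertible exactly when there is no nonzero relation
`∑ l, g l * f l ≡ 0` with `deg (g l) < d`. Allow a separate bound `d l` for each `l`, with
`∑ l, d l = n`, and work modulo `X ^ n`. Among the polynomials with nonzero constant term pick one,
`f l`, with `d l` maximal, and subtract multiples of it to clear the other constant terms. In a
relation, `X` then divides `g l`, and cancelling one factor `X` lowers both `d l` and `n` by one.

Inductively, for fixed constant terms not all vanishing on `{k | d k ≠ 0}`, the number of
relation-free families depends only on the size of this set. Each step frees `m` coefficients: the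
new constant terms of the `f k` with `k ≠ l`, and the top coefficient of `f l`. All their `q ^ m`
values are admissible if `d l` stays positive; if it drops to `0` and `r` positive bounds remain,
the new constant terms must not all vanish there, which leaves the fraction `1 - q ^ (-r)`.
-/

open Polynomial Finset

section Shear

variable {F ι V : Type*} [Ring F] [AddCommGroup V] [Module F V]

/-- Subtracting the multiple `a k • v l` of the pivot entry `v l` from every entry `v k` of a
family; the pivot entry itself stays fixed because `a l = 0`. -/
def shearEquiv (l : ι) (a : ι → F) (ha : a l = 0) : (ι → V) ≃ (ι → V) where
  toFun v k := v k - a k • v l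
  invFun v k := v k + a k • v l
  left_inv v := by ext k; simp [ha]
  right_inv v := by ext k; simp [ha]

@[simp]
lemma shearEquiv_apply (l : ι) (a : ι → F) (ha : a l = 0) (v : ι → V) (k : ι) :
    shearEquiv l a ha v k = v k - a k • v l := rfl

lemma shearEquiv_neg_shearEquiv (l : ι) (a : ι → F) (ha : a l = 0) (v : ι → V) :
    shearEquiv l (-a) (by simp [ha]) (shearEquiv l a ha v) = v := by
  ext k
  simp [ha]

end Shear

section TruncatedPolynomials

variable {F : Type*} [Semiring F]

lemma X_pow_dvd_iff_toFn_eq_zero {n : ℕ} {p : F[X]} : X ^ n ∣ p ↔ toFn n p = 0 := by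
  simp [X_pow_dvd_iff, funext_iff, Fin.forall_iff, toFn]

lemma degree_X_mul_lt_succ_iff [Nontrivial F] {n : ℕ} {p : F[X]} :
    (X * p).degree < ((n + 1 : ℕ) : WithBot ℕ) ↔ p.degree < n := by
  rw [X_mul, degree_mul_X, Nat.cast_add_one]
  exact WithBot.add_lt_add_iff_right (by simp)

lemma X_dvd_of_X_dvd_sum [NoZeroDivisors F] {ι : Type*} [Fintype ι] {f g : ι → F[X]} {l : ι}
    (hl : (f l).coeff 0 ≠ 0) (hf : ∀ k ≠ l, X ∣ f k) (h : X ∣ ∑ k, g k * f k) : X ∣ g l := by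
  simp only [X_dvd_iff] at hf h ⊢
  rw [finsetSum_coeff, sum_eq_single l (fun k _ hk => by simp [hf k hk]) (by simp),
    mul_coeff_zero] at h
  exact (mul_eq_zero.1 h).resolve_right hl

variable [DecidableEq F]

lemma ofFn_toFn_of_degree_lt {n : ℕ} {p : F[X]} (hp : p.degree < n) : ofFn n (toFn n p) = p := by
  ext i
  by_cases hi : i < n
  · simp [hi, toFn]
  · simp [not_lt.1 hi, coeff_eq_zero_of_degree_lt (hp.trans_le (by simpa using hi))]

lemma ofFn_cons {n : ℕ} (a : F) (v : Fin n → F) :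
    ofFn (n + 1) (Fin.cons a v) = C a + X * ofFn n v := by
  simp [ofFn_eq_sum_monomial, Fin.sum_univ_succ, mul_sum, X_mul_monomial]

lemma ofFn_snoc {n : ℕ} (v : Fin n → F) (a : F) :
    ofFn (n + 1) (Fin.snoc v a) = ofFn n v + monomial n a := by
  simp [ofFn_eq_sum_monomial, Fin.sum_univ_castSucc]

end TruncatedPolynomials

/-- The polynomials `f k` admit no nontrivial relation `∑ k, g k * f k ≡ 0` modulo `X ^ n` with
`deg (g k) < d k`; equivalently, the shifts `X ^ j * f k` with `j < d k` are linearly independent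
modulo `X ^ n`. -/
def SyzygyFree {F ι : Type*} [CommRing F] [Fintype ι] (d : ι → ℕ) (n : ℕ) (f : ι → F[X]) : Prop :=
  ∀ g : ι → F[X], (∀ k, (g k).degree < d k) → X ^ n ∣ ∑ k, g k * f k → g = 0

namespace SyzygyFree

section CommRing

variable {F ι : Type*} [CommRing F] [Fintype ι] {d : ι → ℕ} {n : ℕ} {f f' : ι → F[X]}

lemma of_dvd_sub (h : ∀ k, X ^ n ∣ f k - f' k) (hf : SyzygyFree d n f) : SyzygyFree d n f' := by
  refine fun g hg hdvd => hf g hg ?_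
  have hsub : X ^ n ∣ ∑ k, g k * f k - ∑ k, g k * f' k := by
    simp_rw [← sum_sub_distrib, ← mul_sub]
    exact dvd_sum fun k _ => (h k).mul_left _
  exact (dvd_iff_dvd_of_dvd_sub hsub).2 hdvd

lemma congr_of_dvd_sub (h : ∀ k, X ^ n ∣ f k - f' k) : SyzygyFree d n f ↔ SyzygyFree d n f' :=
  ⟨of_dvd_sub h, of_dvd_sub fun k => (dvd_sub_comm).1 (h k)⟩

lemma of_const_add_X_mul {c : ι → F} (hc : ∀ k, d k ≠ 0 → c k = 0)
    (hf : SyzygyFree d (n + 1) fun k => C (c k) + X * f k) : SyzygyFree d n f := by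
  refine fun g hg hdvd => hf g hg ?_
  have hsum : ∑ k, g k * (C (c k) + X * f k) = X * ∑ k, g k * f k := by
    rw [mul_sum]
    refine sum_congr rfl fun k _ => ?_
    by_cases hk : d k = 0
    · have : g k = 0 := by simpa [hk] using hg k
      simp [this]
    · rw [hc k hk, C_0]
      ring
  rw [hsum, pow_succ']
  exact mul_dvd_mul_left X hdvd

/-- The coefficients modulo `X ^ n` of `∑ k, g k * f k`, as a linear function of the coefficients
of the polynomials `g k` of degree less than `d k`. -/
noncomputable def combinationMap [DecidableEq F] (d : ι → ℕ) (n : ℕ) (f : ι → F[X]) :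
    ((k : ι) → Fin (d k) → F) →ₗ[F] (Fin n → F) :=
  toFn n ∘ₗ ∑ k, LinearMap.mulRight F (f k) ∘ₗ ofFn (d k) ∘ₗ LinearMap.proj k

lemma combinationMap_apply [DecidableEq F] (v : (k : ι) → Fin (d k) → F) :
    combinationMap d n f v = toFn n (∑ k, ofFn (d k) (v k) * f k) := by
  simp [combinationMap]

lemma iff_injective_combinationMap [DecidableEq F] :
    SyzygyFree d n f ↔ Function.Injective (combinationMap d n f) := by
  simp_rw [injective_iff_map_eq_zero, combinationMap_apply, ← X_pow_dvd_iff_toFn_eq_zero]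
  constructor
  · intro hf v hv
    have hzero := hf (fun k => ofFn (d k) (v k)) (fun k => ofFn_degree_lt _) hv
    funext k
    exact injective_ofFn (d k) (by simpa using congrFun hzero k)
  · intro hinj g hg hdvd
    have hzero := hinj (fun k => toFn (d k) (g k)) (by
      simpa only [ofFn_toFn_of_degree_lt (hg _)] using hdvd)
    funext k
    rw [← ofFn_toFn_of_degree_lt (hg k), congrFun hzero k]
    simp

lemma sum_le [Nontrivial F] (hf : SyzygyFree d n f) : ∑ k, d k ≤ n := by
  classical
  have := LinearMap.finrank_le_finrank_of_injective (iff_injective_combinationMap.1 hf)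
  simpa [Module.finrank_pi_fintype] using this

end CommRing

section Pivot

variable {F ι : Type*} [CommRing F] [Fintype ι] {d : ι → ℕ} {n : ℕ}
  {f f' : ι → F[X]} {l : ι}

lemma shear {a : ι → F} (ha : a l = 0) (hd : ∀ k, a k ≠ 0 → d k ≤ d l)
    (hf : SyzygyFree d n f) : SyzygyFree d n (shearEquiv l a ha f) := by
  classical
  intro g hg hdvd
  set s : F[X] := ∑ k, a k • g k with hs
  have hs_deg : s.degree < d l := by
    refine (degree_sum_le _ _).trans_lt ((Finset.sup_lt_iff (WithBot.bot_lt_coe _)).2 fun k _ => ?_)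
    by_cases hk : a k = 0
    · simp [hk]
    · exact (degree_smul_le _ _).trans_lt ((hg k).trans_le (by exact_mod_cast hd k hk))
  have hsum : ∑ k, (g - Pi.single l s : ι → F[X]) k * f k = ∑ k, g k * shearEquiv l a ha f k := by
    simp [sub_mul, mul_sub, sum_sub_distrib, Pi.single_apply, hs, sum_mul]
  have hg_eq : g = Pi.single l s := by
    refine sub_eq_zero.1 (hf _ (fun k => ?_) (hsum ▸ hdvd))
    obtain rfl | hk := eq_or_ne k l
    · simpa using (degree_sub_le _ _).trans_lt (max_lt (hg k) hs_deg)
    · simpa [hk] using hg k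
  have hs_zero : s = 0 := by
    rw [hs, hg_eq]
    refine sum_eq_zero fun k _ => ?_
    obtain rfl | hk := eq_or_ne k l
    · rw [ha, zero_smul]
    · rw [Pi.single_eq_of_ne hk, smul_zero]
  rw [hg_eq, hs_zero, Pi.single_zero]

lemma shear_iff {a : ι → F} (ha : a l = 0) (hd : ∀ k, a k ≠ 0 → d k ≤ d l) :
    SyzygyFree d n (shearEquiv l a ha f) ↔ SyzygyFree d n f := by
  refine ⟨fun h => ?_, shear ha hd⟩
  rw [← shearEquiv_neg_shearEquiv l a ha f]
  exact h.shear (by simp [ha]) fun k hk => hd k (by simpa using hk)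

lemma succ_iff_of_coeff_zero_ne_zero [DecidableEq ι] [IsDomain F]
    (hl : (f l).coeff 0 ≠ 0) (hfl : f' l = f l) (hfk : ∀ k ≠ l, f' k = X * f k) :
    SyzygyFree (d + Pi.single l 1) (n + 1) f' ↔ SyzygyFree d n f := by
  let w : ι → F[X] := Pi.mulSingle l X
  have hdeg (g : ι → F[X]) (k : ι) :
      ((w * g) k).degree < ((d + Pi.single l 1 : ι → ℕ) k : ℕ) ↔ (g k).degree < d k := by
    obtain rfl | hk := eq_or_ne k l
    · simpa [w] using degree_X_mul_lt_succ_iff (p := g k)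
    · simp [w, hk]
  have hsum (g : ι → F[X]) : ∑ k, (w * g) k * f' k = X * ∑ k, g k * f k := by
    refine (sum_congr rfl fun k _ => ?_).trans (mul_sum ..).symm
    obtain rfl | hk := eq_or_ne k l
    · simp [w, hfl, mul_assoc]
    · simp [w, hk, hfk k hk, mul_left_comm]
  have hdvd_iff (g : ι → F[X]) :
      X ^ (n + 1) ∣ ∑ k, (w * g) k * f' k ↔ X ^ n ∣ ∑ k, g k * f k := by
    rw [hsum, pow_succ', mul_dvd_mul_iff_left X_ne_zero]
  constructor
  · intro hf' g hg hdvd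
    have hzero := hf' (w * g) (fun k => (hdeg g k).2 (hg k)) ((hdvd_iff g).2 hdvd)
    funext k
    obtain rfl | hk := eq_or_ne k l
    · simpa [w] using congrFun hzero k
    · simpa [w, hk] using congrFun hzero k
  · intro hf g' hg' hdvd
    obtain ⟨u, hu⟩ : X ∣ g' l :=
      X_dvd_of_X_dvd_sum (by rwa [hfl]) (fun k hk => hfk k hk ▸ dvd_mul_right X (f k))
        ((dvd_pow_self X n.succ_ne_zero).trans hdvd)
    obtain ⟨g, rfl⟩ : ∃ g, g' = w * g := by
      refine ⟨Function.update g' l u, funext fun k => ?_⟩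
      obtain rfl | hk := eq_or_ne k l
      · simpa [w] using hu
      · simp [w, hk]
    rw [hf g (fun k => (hdeg g k).1 (hg' k)) ((hdvd_iff g).1 hdvd), mul_zero]

end Pivot

end SyzygyFree

section FunctionCounting

lemma card_subtype_prod_eq_sum {α β : Type*} [Fintype α] [Finite β] (p : α → β → Prop) :
    Nat.card {x : α × β // p x.1 x.2} = ∑ a, Nat.card {b // p a b} := by
  rw [Nat.card_congr (Equiv.subtypeProdEquivSigmaSubtype p), Nat.card_sigma]

lemma card_filter_ne_zero_pos {ι : Type*} [Fintype ι] {d : ι → ℕ} (hd : ∑ k, d k ≠ 0) :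
    0 < #{k | d k ≠ 0} := by
  obtain ⟨k, -, hk⟩ := exists_ne_zero_of_sum_ne_zero hd
  exact card_pos.2 ⟨k, by simpa using hk⟩

variable {ι : Type*} [DecidableEq ι]

/-- Assembles coefficient tuples of length `N + 1` from entries `c k` and tuples `s k` of length
`N`: the entry goes to the front for `k ≠ l`, where it is the constant term left after division by
`X`, and to the end for the pivot `l`, where it is the coefficient lost by truncation. -/
def joinEnds (F : Type*) (N : ℕ) (l : ι) : (ι → F) × (ι → Fin N → F) ≃ (ι → Fin (N + 1) → F) :=
  (Equiv.arrowProdEquivProdArrow ι _ _).symm.trans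
    (Equiv.piCongrRight fun k =>
      if k = l then Fin.snocEquiv fun _ => F else Fin.consEquiv fun _ => F)

lemma joinEnds_apply_self {F : Type*} (N : ℕ) (l : ι) (p : (ι → F) × (ι → Fin N → F)) :
    joinEnds F N l p l = Fin.snoc (p.2 l) (p.1 l) := by
  simp [joinEnds, Fin.snocEquiv]

lemma joinEnds_apply_of_ne {F : Type*} {N : ℕ} {k l : ι} (hk : k ≠ l)
    (p : (ι → F) × (ι → Fin N → F)) :
    joinEnds F N l p k = Fin.cons (p.1 k) (p.2 k) := by
  simp [joinEnds, Fin.consEquiv, hk]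

lemma exists_pivot [Finite ι] {α : Type*} [Zero α] {d : ι → ℕ} {c : ι → α}
    (h : ∃ k, d k ≠ 0 ∧ c k ≠ 0) :
    ∃ l, c l ≠ 0 ∧ (∀ k, c k ≠ 0 → d k ≤ d l) ∧ ∃ d' : ι → ℕ, d = d' + Pi.single l 1 := by
  obtain ⟨k₀, hdk₀, hck₀⟩ := h
  obtain ⟨l, hl, hmax⟩ := Set.exists_max_image {k | c k ≠ 0} d (Set.toFinite _) ⟨k₀, hck₀⟩
  have hdl : 1 ≤ d l := (Nat.one_le_iff_ne_zero.2 hdk₀).trans (hmax k₀ hck₀)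
  refine ⟨l, hl, hmax, d - Pi.single l 1, (tsub_add_cancel_of_le fun k => ?_).symm⟩
  obtain rfl | hk := eq_or_ne k l <;> simp [*]

variable [Fintype ι]

lemma card_forall_mem_eq_zero_mul {α : Type*} [Fintype α] [DecidableEq α] [Zero α]
    (S : Finset ι) :
    #{c : ι → α | ∀ k ∈ S, c k = 0} * Fintype.card α ^ #S = Fintype.card α ^ Fintype.card ι := by
  have hfilter : ({c : ι → α | ∀ k ∈ S, c k = 0} : Finset (ι → α)) =
      Fintype.piFinset fun k => if k ∈ S then {0} else univ := by
    ext c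
    simp only [mem_filter_univ, Fintype.mem_piFinset]
    exact forall_congr' fun k => by split_ifs with hk <;> simp [hk]
  calc #{c : ι → α | ∀ k ∈ S, c k = 0} * Fintype.card α ^ #S
      = (∏ k, if k ∈ S then 1 else Fintype.card α) *
          ∏ k, if k ∈ S then Fintype.card α else 1 := by
        simp [hfilter, apply_ite card]
    _ = ∏ _k : ι, Fintype.card α := by
        rw [← prod_mul_distrib]
        exact prod_congr rfl fun k _ => by split_ifs <;> simp
    _ = Fintype.card α ^ Fintype.card ι := by rw [prod_const, card_univ]

lemma sum_eq_of_forall_mem_eq_zero {α : Type*} [Fintype α] [Zero α] {S : Finset ι}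
    {w : (ι → α) → ℚ} {K : ℚ} (hzero : ∀ c, (∀ k ∈ S, c k = 0) → w c = 0)
    (hK : ∀ c, (∃ k ∈ S, c k ≠ 0) → w c = K) :
    ∑ c, w c =
      (Fintype.card α : ℚ) ^ Fintype.card ι * (1 - ((Fintype.card α : ℚ) ^ #S)⁻¹) * K := by
  classical
  have hw (c : ι → α) : w c = if ∀ k ∈ S, c k = 0 then 0 else K := by
    split_ifs with h
    · exact hzero c h
    · exact hK c (by simpa using h)
  have hq : (Fintype.card α : ℚ) ≠ 0 := by exact_mod_cast Fintype.card_ne_zero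
  have hcompl := card_filter_add_card_filter_not (s := univ) fun c : ι → α => ∀ k ∈ S, c k = 0
  have hvanish := card_forall_mem_eq_zero_mul (α := α) S
  rw [card_univ, Fintype.card_fun] at hcompl
  qify at hcompl hvanish
  rw [← eq_div_iff (pow_ne_zero _ hq)] at hvanish
  simp only [hw, sum_ite, sum_const_zero, zero_add, sum_const, nsmul_eq_mul]
  linear_combination (hcompl - hvanish) * K

lemma filter_add_single_ne_zero (d : ι → ℕ) (l : ι) :
    ({k | (d + Pi.single l 1 : ι → ℕ) k ≠ 0} : Finset ι) =
      insert l ({k | d k ≠ 0} : Finset ι) := by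
  ext k
  obtain rfl | hk := eq_or_ne k l <;> simp [*]

end FunctionCounting

section Counting

variable {F ι : Type*} [Field F] [DecidableEq F] [Fintype ι]

/-- The number of families of polynomials `f k` of degree at most `N` with constant terms `c k`
that satisfy `SyzygyFree d (N + 1)`; such a family is encoded by the coefficients `t k` of the
tails `(f k - c k) / X`. -/
noncomputable def syzygyFreeCount (N : ℕ) (d : ι → ℕ) (c : ι → F) : ℕ :=
  Nat.card {t : ι → Fin N → F // SyzygyFree d (N + 1) fun k => C (c k) + X * ofFn N (t k)}

lemma card_syzygyFree_eq_sum_count [Fintype F] [DecidableEq ι] (N : ℕ) (d : ι → ℕ) :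
    Nat.card {v : ι → Fin (N + 1) → F // SyzygyFree d (N + 1) fun k => ofFn (N + 1) (v k)} =
      ∑ c : ι → F, syzygyFreeCount N d c := by
  simp only [syzygyFreeCount, ← card_subtype_prod_eq_sum]
  let consTails : (ι → F) × (ι → Fin N → F) ≃ (ι → Fin (N + 1) → F) :=
    (Equiv.arrowProdEquivProdArrow ι _ _).symm.trans
      (Equiv.piCongrRight fun _ => Fin.consEquiv fun _ => F)
  refine (Nat.card_congr (consTails.subtypeEquiv fun p => ?_)).symm
  simp only [← ofFn_cons]
  rfl

lemma syzygyFreeCount_eq_zero {N : ℕ} {d : ι → ℕ} {c : ι → F} (hd : ∑ k, d k = N + 1)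
    (hc : ∀ k, d k ≠ 0 → c k = 0) : syzygyFreeCount N d c = 0 := by
  refine Nat.card_eq_zero.2 (Or.inl ⟨fun ⟨t, ht⟩ => ?_⟩)
  have := (ht.of_const_add_X_mul hc).sum_le
  omega

section Pivot

variable [DecidableEq ι]

lemma syzygyFreeCount_eq_single (N : ℕ) {d : ι → ℕ} {c : ι → F} {l : ι} (hl : c l ≠ 0)
    (hmax : ∀ k, c k ≠ 0 → d k ≤ d l) :
    syzygyFreeCount N d c = syzygyFreeCount N d (Pi.single l (c l)) := by
  let a : ι → F := Function.update (fun k => c k / c l) l 0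
  have ha : a l = 0 := Function.update_self ..
  have hda (k : ι) (hk : a k ≠ 0) : d k ≤ d l := by
    obtain rfl | hkl := eq_or_ne k l
    · rfl
    · exact hmax k fun hck => hk (by simp [a, hkl, hck])
  refine Nat.card_congr ((shearEquiv l a ha).subtypeEquiv fun t => ?_)
  rw [← SyzygyFree.shear_iff ha hda]
  refine iff_of_eq (congrArg _ (funext fun k => ?_))
  have hconst : c k - a k * c l = (Pi.single l (c l) : ι → F) k := by
    obtain rfl | hkl := eq_or_ne k l
    · simp [ha]
    · simp [a, hkl, hl]
  simp only [← hconst, shearEquiv_apply, map_sub, map_smul, smul_eq_C_mul, map_mul]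
  ring

lemma syzygyFree_single_iff {N : ℕ} {d : ι → ℕ} {l : ι} {a : F} (ha : a ≠ 0)
    (t : ι → Fin N → F) :
    SyzygyFree (d + Pi.single l 1) (N + 1)
        (fun k => C ((Pi.single l a : ι → F) k) + X * ofFn N (t k)) ↔
      SyzygyFree d N (fun k => if k = l then C a + X * ofFn N (t l) else ofFn N (t k)) :=
  SyzygyFree.succ_iff_of_coeff_zero_ne_zero (l := l) (by simpa using ha) (by simp)
    fun k hk => by simp [hk]

lemma syzygyFreeCount_zero_single {l : ι} {a : F} (ha : a ≠ 0) :
    syzygyFreeCount 0 (0 + Pi.single l 1) (Pi.single l a) = 1 := by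
  have htriv (t : ι → Fin 0 → F) : SyzygyFree (0 + Pi.single l 1) (0 + 1)
      (fun k => C ((Pi.single l a : ι → F) k) + X * ofFn 0 (t k)) := by
    refine (syzygyFree_single_iff ha t).2 fun g hg _ => funext fun k => ?_
    simpa using hg k
  rw [syzygyFreeCount, Nat.card_congr (Equiv.subtypeUnivEquiv htriv)]
  simp

lemma syzygyFreeCount_succ_single [Fintype F] (N : ℕ) (d : ι → ℕ) {l : ι} {a : F} (ha : a ≠ 0) :
    syzygyFreeCount (N + 1) (d + Pi.single l 1) (Pi.single l a) =
      ∑ c : ι → F, syzygyFreeCount N d (Function.update c l a) := by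
  simp only [syzygyFreeCount, ← card_subtype_prod_eq_sum]
  refine (Nat.card_congr ((joinEnds F N l).subtypeEquiv fun p => ?_)).symm
  rw [syzygyFree_single_iff ha]
  refine SyzygyFree.congr_of_dvd_sub fun k => ?_
  obtain rfl | hk := eq_or_ne k l
  · rw [Function.update_self, if_pos rfl, joinEnds_apply_self, ofFn_snoc]
    exact ⟨-C (p.1 k), by rw [← C_mul_X_pow_eq_monomial]; ring⟩
  · rw [Function.update_of_ne hk, if_neg hk, joinEnds_apply_of_ne hk, ofFn_cons, sub_self]
    exact dvd_zero _

end Pivot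

theorem syzygyFreeCount_eq [Fintype F] {N : ℕ} {d : ι → ℕ} {c : ι → F} (hd : ∑ k, d k = N + 1)
    (hc : ∃ k, d k ≠ 0 ∧ c k ≠ 0) :
    (syzygyFreeCount N d c : ℚ) = (Fintype.card F : ℚ) ^ (N * Fintype.card ι) *
      ∏ i ∈ Ico 1 #{k | d k ≠ 0}, (1 - ((Fintype.card F : ℚ) ^ i)⁻¹) := by
  classical
  induction N generalizing d c with
  | zero =>
    obtain ⟨l, hl, hmax, d, rfl⟩ := exists_pivot hc
    have hd0 : d = 0 := by simpa [sum_add_distrib, funext_iff] using hd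
    rw [syzygyFreeCount_eq_single 0 hl hmax, hd0, syzygyFreeCount_zero_single hl,
      filter_add_single_ne_zero]
    simp
  | succ N ih =>
    obtain ⟨l, hl, hmax, d, rfl⟩ := exists_pivot hc
    replace hd : ∑ k, d k = N + 1 := by simpa [sum_add_distrib] using hd
    rw [syzygyFreeCount_eq_single _ hl hmax, syzygyFreeCount_succ_single N d hl,
      filter_add_single_ne_zero, Nat.cast_sum]
    set S : Finset ι := {k | d k ≠ 0} with hS
    by_cases hlS : l ∈ S
    · have hconst (c' : ι → F) := ih hd ⟨l, by simpa [hS] using hlS,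
        (Function.update_self l (c l) c').symm ▸ hl⟩
      simp only [hconst, insert_eq_of_mem hlS, sum_const, card_univ, Fintype.card_fun,
        nsmul_eq_mul, Nat.cast_pow]
      ring
    · have hupdate (c' : ι → F) (k : ι) (hk : k ∈ S) : Function.update c' l (c l) k = c' k :=
        Function.update_of_ne (ne_of_mem_of_not_mem hk hlS) ..
      have hS_pos : 0 < #S := card_filter_ne_zero_pos (hd.trans_ne N.succ_ne_zero)
      have hzero (c' : ι → F) (hc' : ∀ k ∈ S, c' k = 0) :
          (syzygyFreeCount N d (Function.update c' l (c l)) : ℚ) = 0 :=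
        Nat.cast_eq_zero.2 <| syzygyFreeCount_eq_zero hd fun k hk =>
          have hkS : k ∈ S := by simpa [hS] using hk
          (hupdate c' k hkS).trans (hc' k hkS)
      have hconst (c' : ι → F) (hc' : ∃ k ∈ S, c' k ≠ 0) :=
        hc'.elim fun k ⟨hk, hck⟩ => ih hd ⟨k, by simpa [hS] using hk, hupdate c' k hk ▸ hck⟩
      rw [sum_eq_of_forall_mem_eq_zero hzero hconst, card_insert_of_notMem hlS,
        prod_Ico_succ_top hS_pos]
      ring

theorem card_syzygyFree [Fintype F] {n : ℕ} {d : ι → ℕ} (hd : ∑ k, d k = n) :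
    (Nat.card {v : ι → Fin n → F // SyzygyFree d n fun k => ofFn n (v k)} : ℚ) =
      (Fintype.card F : ℚ) ^ (n * Fintype.card ι) *
        ∏ i ∈ Ico 1 (#{k | d k ≠ 0} + 1), (1 - ((Fintype.card F : ℚ) ^ i)⁻¹) := by
  classical
  cases n with
  | zero =>
    have hd0 : d = 0 := by simpa [funext_iff] using hd
    have htriv (v : ι → Fin 0 → F) : SyzygyFree d 0 fun k => ofFn 0 (v k) :=
      fun g hg _ => funext fun k => by simpa [hd0] using hg k
    rw [Nat.card_congr (Equiv.subtypeUnivEquiv htriv)]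
    simp [hd0]
  | succ N =>
    have hS_pos : 0 < #{k | d k ≠ 0} := card_filter_ne_zero_pos (hd.trans_ne N.succ_ne_zero)
    rw [card_syzygyFree_eq_sum_count, Nat.cast_sum,
      sum_eq_of_forall_mem_eq_zero (S := {k | d k ≠ 0})
        (fun c hc => Nat.cast_eq_zero.2 (syzygyFreeCount_eq_zero hd (by simpa using hc)))
        (fun c hc => syzygyFreeCount_eq hd (by simpa using hc)),
      prod_Ico_succ_top hS_pos]
    ring

end Counting

lemma prod_pow_sub_pow_eq {K : Type*} [Field K] {q : K} (hq : q ≠ 0) (m : ℕ) :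
    ∏ i ∈ range m, (q ^ m - q ^ i) = q ^ (m * m) * ∏ i ∈ Ico 1 (m + 1), (1 - (q ^ i)⁻¹) := by
  calc ∏ i ∈ range m, (q ^ m - q ^ i)
      = ∏ i ∈ range m, q ^ m * (1 - (q ^ (m - i))⁻¹) := by
        refine prod_congr rfl fun i hi => ?_
        rw [pow_sub₀ q hq (mem_range.1 hi).le]
        field_simp
    _ = q ^ (m * m) * ∏ i ∈ range m, (1 - (q ^ (m - i))⁻¹) := by
        rw [prod_mul_distrib, prod_const, card_range, pow_mul]
    _ = q ^ (m * m) * ∏ i ∈ Ico 1 (m + 1), (1 - (q ^ i)⁻¹) := by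
        rw [range_eq_Ico, prod_Ico_reflect (fun i => 1 - (q ^ i)⁻¹) 0 m.le_succ]
        simp

theorem card_syzygyFree_const {F : Type*} [Field F] [DecidableEq F] [Fintype F] (m : ℕ) {d : ℕ}
    (hd : 0 < d) :
    Nat.card {v : Fin m → Fin (m * d) → F //
        SyzygyFree (fun _ => d) (m * d) fun k => ofFn (m * d) (v k)} =
      (∏ i ∈ range m, (Fintype.card F ^ m - Fintype.card F ^ i)) *
        Fintype.card F ^ (m ^ 2 * (d - 1)) := by
  have hq : (Fintype.card F : ℚ) ≠ 0 := by exact_mod_cast Fintype.card_ne_zero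
  have hγ : ((∏ i ∈ range m, (Fintype.card F ^ m - Fintype.card F ^ i) : ℕ) : ℚ) =
      ∏ i ∈ range m, ((Fintype.card F : ℚ) ^ m - (Fintype.card F : ℚ) ^ i) := by
    rw [Nat.cast_prod]
    refine prod_congr rfl fun i hi => ?_
    rw [Nat.cast_sub (Nat.pow_le_pow_right Fintype.card_pos (mem_range.1 hi).le)]
    push_cast
    rfl
  obtain ⟨e, rfl⟩ := Nat.exists_eq_add_of_lt hd
  qify
  rw [card_syzygyFree (by simp), ← Nat.cast_prod, hγ, prod_pow_sub_pow_eq hq]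
  simp only [zero_add, Fintype.card_fin, ne_eq, Nat.add_eq_zero_iff, one_ne_zero, and_false,
    not_false_eq_true, filter_true, card_univ, add_tsub_cancel_right]
  ring

section BlockShiftMatrix

variable {F : Type*} [Field F] {m d : ℕ}

/-- The column `c = j * m + l` corresponds to the `l`-th column of the `j`-th block. -/
def columnIndex (m d : ℕ) : Fin (m * d) ≃ Fin m × Fin d :=
  (finCongr (mul_comm m d)).trans (finProdFinEquiv.symm.trans (Equiv.prodComm _ _))

/-- The matrix whose column `j * m + l` lists the coefficients of `X ^ j * f l`. -/
noncomputable def blockShiftMatrix (m d : ℕ) (f : Fin m → F[X]) :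
    Matrix (Fin (m * d)) (Fin (m * d)) F :=
  Matrix.of fun i c => (X ^ ((columnIndex m d c).2 : ℕ) * f (columnIndex m d c).1).coeff i

lemma blockShiftMatrix_apply (f : Fin m → F[X]) (i : Fin (m * d)) {c : Fin (m * d)} {j l : ℕ}
    (hl : l < m) (hc : (c : ℕ) = j * m + l) :
    blockShiftMatrix m d f i c = if j ≤ (i : ℕ) then (f ⟨l, hl⟩).coeff (i - j) else 0 := by
  have hm : 0 < m := l.zero_le.trans_lt hl
  have hfst : (columnIndex m d c).1 = ⟨l, hl⟩ := Fin.ext (by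
    simp [columnIndex, hc, Fin.modNat, Nat.mod_eq_of_lt hl])
  have hsnd : ((columnIndex m d c).2 : ℕ) = j := by
    simp [columnIndex, hc, Fin.divNat, Nat.add_div_of_dvd_right, Nat.div_eq_of_lt hl, hm]
  simp only [blockShiftMatrix, Matrix.of_apply, hfst, hsnd, coeff_X_pow_mul']

lemma blockShiftMatrix_mulVec [DecidableEq F] (f : Fin m → F[X]) (v : Fin m → Fin d → F) :
    (blockShiftMatrix m d f).mulVec (fun c => v (columnIndex m d c).1 (columnIndex m d c).2) =
      SyzygyFree.combinationMap (fun _ => d) (m * d) f v := by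
  ext i
  rw [SyzygyFree.combinationMap_apply]
  simp only [Matrix.mulVec, dotProduct, blockShiftMatrix, Matrix.of_apply, toFn, LinearMap.pi_apply,
    lcoeff_apply, finsetSum_coeff, ofFn_eq_sum_monomial, sum_mul]
  refine ((columnIndex m d).sum_comp fun p =>
    (X ^ (p.2 : ℕ) * f p.1).coeff i * v p.1 p.2).trans ?_
  rw [Fintype.sum_prod_type]
  refine sum_congr rfl fun k _ => sum_congr rfl fun j _ => ?_
  rw [← C_mul_X_pow_eq_monomial, mul_assoc, coeff_C_mul, mul_comm]

lemma isUnit_blockShiftMatrix_iff {f : Fin m → F[X]} :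
    IsUnit (blockShiftMatrix m d f) ↔ SyzygyFree (fun _ => d) (m * d) f := by
  classical
  let uncurryColumns : (Fin m → Fin d → F) ≃ (Fin (m * d) → F) :=
    (Equiv.curry _ _ _).symm.trans ((columnIndex m d).symm.arrowCongr (Equiv.refl F))
  have hcomp : (blockShiftMatrix m d f).mulVec ∘ uncurryColumns =
      SyzygyFree.combinationMap (fun _ => d) (m * d) f :=
    funext (blockShiftMatrix_mulVec f)
  rw [← Matrix.mulVec_injective_iff_isUnit, SyzygyFree.iff_injective_combinationMap, ← hcomp,
    Equiv.injective_comp]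

lemma blockShiftMatrix_ofFn_injective [DecidableEq F] (hd : 0 < d) :
    Function.Injective fun v : Fin m → Fin (m * d) → F =>
      blockShiftMatrix m d fun k => ofFn (m * d) (v k) := by
  intro v w h
  funext l i
  have hl : (l : ℕ) < m * d := l.2.trans_le (Nat.le_mul_of_pos_right m hd)
  have hentry := congrFun₂ h i ⟨l, hl⟩
  beta_reduce at hentry
  rw [blockShiftMatrix_apply _ i l.2 (j := 0) (by simp),
    blockShiftMatrix_apply _ i l.2 (j := 0) (by simp)] at hentry
  simpa using hentry

lemma mem_range_blockShiftMatrix_iff [DecidableEq F] {M : Matrix (Fin (m * d)) (Fin (m * d)) F} :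
    M ∈ Set.range (fun v : Fin m → Fin (m * d) → F =>
        blockShiftMatrix m d fun k => ofFn (m * d) (v k)) ↔
      ∃ a : ℕ → ℕ → F, ∀ (i c : Fin (m * d)) (j l : ℕ), l < m → (c : ℕ) = j * m + l →
        M i c = if j ≤ (i : ℕ) then a ((i : ℕ) - j) l else 0 := by
  constructor
  · rintro ⟨v, rfl⟩
    refine ⟨fun i l => if hl : l < m then (ofFn (m * d) (v ⟨l, hl⟩)).coeff i else 0, ?_⟩
    intro i c j l hl hc
    simp only [blockShiftMatrix_apply _ i hl hc, dif_pos hl]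
  · rintro ⟨a, ha⟩
    refine ⟨fun l i => a i l, ?_⟩
    ext i c
    have hm : 0 < m := Nat.pos_of_mul_pos_right c.pos
    have hl : (c : ℕ) % m < m := Nat.mod_lt _ hm
    have hc : (c : ℕ) = c / m * m + c % m := (Nat.div_add_mod' _ _).symm
    beta_reduce
    rw [blockShiftMatrix_apply _ i hl hc, ha i c _ _ hl hc]
    simp [ofFn_coeff_eq_val_of_lt _ ((Nat.sub_le _ _).trans_lt i.2)]

end BlockShiftMatrix

/-- the number of invertible `md × md` matrices over `F_q` in which each
successive block of `m` columns is the first block of `m` columns shifted down by one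
row (zeros filling the top) equals `γ_m(q) · q^{m²(d−1)}`, where
`γ_m(q) = (q^m − 1)(q^m − q)⋯(q^m − q^{m−1})`. -/
theorem count_block_shift_invertible_matrices (F : Type*) [Field F] [Fintype F]
    (m d : ℕ) (hm : 0 < m) (hd : 0 < d) :
    Set.ncard {M : Matrix (Fin (m * d)) (Fin (m * d)) F | IsUnit M ∧
      ∃ a : ℕ → ℕ → F, ∀ (i c : Fin (m * d)) (j l : ℕ), l < m → (c : ℕ) = j * m + l →
        M i c = if j ≤ (i : ℕ) then a ((i : ℕ) - j) l else 0} =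
      (∏ i ∈ Finset.range m, (Fintype.card F ^ m - Fintype.card F ^ i)) *
        Fintype.card F ^ (m ^ 2 * (d - 1)) := by
  classical
  let matrixOf (v : Fin m → Fin (m * d) → F) := blockShiftMatrix m d fun k => ofFn (m * d) (v k)
  have hset : {M : Matrix (Fin (m * d)) (Fin (m * d)) F | IsUnit M ∧
      ∃ a : ℕ → ℕ → F, ∀ (i c : Fin (m * d)) (j l : ℕ), l < m → (c : ℕ) = j * m + l →
        M i c = if j ≤ (i : ℕ) then a ((i : ℕ) - j) l else 0} =
      matrixOf '' {v | SyzygyFree (fun _ => d) (m * d) fun k => ofFn (m * d) (v k)} := by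
    simp only [← mem_range_blockShiftMatrix_iff, ← isUnit_blockShiftMatrix_iff]
    exact (Set.image_preimage_eq_inter_range (f := matrixOf) (t := {M | IsUnit M})).symm
  rw [hset, Set.ncard_image_of_injective _ (blockShiftMatrix_ofFn_injective hd),
    ← card_syzygyFree_const m hd]
  rfl
end

section
/- Let T be a linear operator on an md-dimensional vector space V over F_q, where m, d are positive integers. The number of ordered m-tuples (α_1,…,α_m) ∈ V^m such that the span of {T^i α_j : 0 ≤ i ≤ d−1, 1 ≤ j ≤ m} is all of V equals γ_m(q) · σ(m,d;T). Equivalently, the probability that the order-d Krylov subspace generated by a uniformly random ordered m-tuple equals V is γ_m(q) · σ(m,d;T) / q^{m^2 d}. -/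
/-!
Since `dim V = md`, comparing dimensions shows that `m` vectors generate `V` as an order-`d`
Krylov subspace exactly when their span is a splitting subspace: `d` translates of a subspace
of dimension at most `m` can only fill `V` if that dimension is `m` and the sum is direct.
Sorting the generating tuples by their span, each splitting subspace accounts for its
`γ_m(q)` ordered bases.
-/

open Module Submodule

section Independence

variable {ι K V : Type*} [Fintype ι] [DivisionRing K] [AddCommGroup V] [Module K V]
  (p : ι → Submodule K V) [∀ i, FiniteDimensional K (p i)]

theorem finrank_iSup_le_sum_finrank :
    finrank K (⨆ i, p i : Submodule K V) ≤ ∑ i, finrank K (p i) := by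
  classical
  rw [iSup_eq_range_dfinsupp_lsum, ← finrank_directSum]
  exact LinearMap.finrank_range_le (DFinsupp.lsum ℕ fun i => (p i).subtype)

variable {p} in
theorem iSupIndep_of_sum_finrank_le_finrank_iSup
    (h : ∑ i, finrank K (p i) ≤ finrank K (⨆ i, p i : Submodule K V)) : iSupIndep p := by
  classical
  apply iSupIndep_of_dfinsupp_lsum_injective
  let sumMap : (Π₀ i, p i) →ₗ[K] V := DFinsupp.lsum ℕ fun i => (p i).subtype
  have rank_nullity : finrank K sumMap.range + finrank K sumMap.ker = ∑ i, finrank K (p i) :=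
    sumMap.finrank_range_add_finrank_ker.trans (finrank_directSum K _)
  rw [iSup_eq_range_dfinsupp_lsum] at h
  change _ ≤ finrank K sumMap.range at h
  have finrank_ker : finrank K sumMap.ker = 0 := by lia
  exact LinearMap.ker_eq_bot.mp (finrank_eq_zero.mp finrank_ker)

end Independence

section Krylov

/-- The Krylov subspace `W + TW + ⋯ + T^{d-1}W` of order `d` generated by a subspace `W`. -/
def krylovSubspace {R M : Type*} [Semiring R] [AddCommMonoid M] [Module R M]
    (T : M →ₗ[R] M) (d : ℕ) (W : Submodule R M) : Submodule R M :=
  ⨆ i : Fin d, W.map (T ^ (i : ℕ))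

theorem krylovSubspace_span_range {R M ι : Type*} [Semiring R] [AddCommMonoid M] [Module R M]
    (T : M →ₗ[R] M) (d : ℕ) (α : ι → M) :
    krylovSubspace T d (span R (Set.range α)) =
      span R (Set.range fun p : Fin d × ι => (T ^ (p.1 : ℕ)) (α p.2)) := by
  simp only [krylovSubspace, map_span, ← Set.range_comp, ← span_iUnion]
  congr 1
  ext x
  simp

section DivisionRing

variable {K V : Type*} [DivisionRing K] [AddCommGroup V] [Module K V]

theorem sum_finrank_map_pow_le (T : V →ₗ[K] V) (d : ℕ) (W : Submodule K V)
    [FiniteDimensional K W] :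
    ∑ i : Fin d, finrank K (W.map (T ^ (i : ℕ))) ≤ d * finrank K W := by
  simpa using Finset.sum_le_card_nsmul Finset.univ _ _
    fun (i : Fin d) _ => finrank_map_le (T ^ (i : ℕ)) W

theorem finrank_krylovSubspace_le (T : V →ₗ[K] V) (d : ℕ) (W : Submodule K V)
    [FiniteDimensional K W] : finrank K (krylovSubspace T d W) ≤ d * finrank K W :=
  (finrank_iSup_le_sum_finrank _).trans (sum_finrank_map_pow_le T d W)

end DivisionRing

variable {F V : Type*} [Field F] [AddCommGroup V] [Module F V] {m d : ℕ}
  (hdim : finrank F V = m * d) (T : V →ₗ[F] V)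
include hdim

theorem isSplittingSubspace_iff_krylovSubspace_eq_top (W : Submodule F V) [FiniteDimensional F W] :
    IsSplittingSubspace T m d W ↔ finrank F W = m ∧ krylovSubspace T d W = ⊤ := by
  refine and_congr_right fun hW => and_iff_right_of_imp fun hT => ?_
  apply iSupIndep_of_sum_finrank_le_finrank_iSup
  calc ∑ i : Fin d, finrank F (W.map (T ^ (i : ℕ)))
    _ ≤ d * finrank F W := sum_finrank_map_pow_le T d W
    _ = finrank F V := by rw [hW, hdim, mul_comm]
    _ = finrank F (⨆ i : Fin d, W.map (T ^ (i : ℕ)) : Submodule F V) := by rw [hT, finrank_top]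

theorem isSplittingSubspace_span_range_iff (hd : 0 < d) (α : Fin m → V) :
    IsSplittingSubspace T m d (span F (Set.range α)) ↔
      span F (Set.range fun p : Fin d × Fin m => (T ^ (p.1 : ℕ)) (α p.2)) = ⊤ := by
  have : FiniteDimensional F (span F (Set.range α)) := .span_of_finite F (Set.finite_range α)
  rw [isSplittingSubspace_iff_krylovSubspace_eq_top hdim, ← krylovSubspace_span_range]
  refine and_iff_right_of_imp fun hT => le_antisymm ?_ ?_
  · simpa [Set.finrank] using finrank_range_le_card (R := F) α
  · have h := finrank_krylovSubspace_le T d (span F (Set.range α))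
    rw [hT, finrank_top, hdim, mul_comm] at h
    exact Nat.le_of_mul_le_mul_left h hd

end Krylov

section Counting

theorem ncard_preimage_eq_mul_ncard {α β : Type*} {f : α → β} {s : Set β} {n : ℕ}
    (hs : s.Finite) (hfin : ∀ b ∈ s, (f ⁻¹' {b}).Finite)
    (hcard : ∀ b ∈ s, (f ⁻¹' {b}).ncard = n) : (f ⁻¹' s).ncard = n * s.ncard := by
  lift s to Finset β using hs
  calc (f ⁻¹' s).ncard
    _ = ∑ b ∈ s, (f ⁻¹' {b}).ncard := Finset.card_preimage_eq_sum_card_image_eq hfin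
    _ = n * (s : Set β).ncard := by
      rw [Finset.sum_congr rfl hcard, Finset.sum_const, smul_eq_mul, mul_comm,
        Set.ncard_coe_finset]

variable {K V : Type*} [DivisionRing K] [AddCommGroup V] [Module K V]

theorem linearIndependent_iff_span_range_subtype_eq {ι : Type*} [Fintype ι] {W : Submodule K V}
    [FiniteDimensional K W] (hW : Fintype.card ι = finrank K W) (s : ι → W) :
    LinearIndependent K s ↔ span K (Set.range fun i => (s i : V)) = W :=
  calc LinearIndependent K s
    _ ↔ span K (Set.range s) = ⊤ :=
      ⟨fun hs => hs.span_eq_top_of_card_eq_finrank' hW,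
        fun hs => linearIndependent_of_top_le_span_of_card_eq_finrank hs.ge hW⟩
    _ ↔ span K (Set.range fun i => (s i : V)) = W :=
      W.span_range_subtype_eq_top_iff fun i => (s i).2

theorem ncard_setOf_span_range_eq [Fintype K] [Finite V] (W : Submodule K V) {m : ℕ}
    (hW : finrank K W = m) :
    {α : Fin m → V | span K (Set.range α) = W}.ncard =
      ∏ i ∈ Finset.range m, (Fintype.card K ^ m - Fintype.card K ^ i) := by
  let incl : (Fin m → W) → Fin m → V := fun s i => s i
  have incl_injective : incl.Injective := Subtype.val_injective.comp_left
  have image_bases :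
      {α : Fin m → V | span K (Set.range α) = W} = incl '' {s | LinearIndependent K s} := by
    ext α
    constructor
    · intro hα
      let s : Fin m → W := fun i => ⟨α i, hα.le (subset_span ⟨i, rfl⟩)⟩
      exact ⟨s, (linearIndependent_iff_span_range_subtype_eq (by simp [hW]) s).mpr hα, rfl⟩
    · rintro ⟨s, hs, rfl⟩
      exact (linearIndependent_iff_span_range_subtype_eq (by simp [hW]) s).mp hs
  rw [image_bases, Set.ncard_image_of_injective _ incl_injective, ← Nat.card_coe_set_eq]
  exact (card_linearIndependent hW.ge).trans (by rw [hW, Finset.prod_range])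

end Counting

/-- the number of `m`-tuples `(α₁,…,α_m) ∈ V^m` whose order-`d` Krylov
subspace `span{Tⁱαⱼ}` is all of `V` equals `γ_m(q) · σ(m,d;T)`; equivalently, the
probability that a uniformly random `m`-tuple generates `V` is
`γ_m(q) · σ(m,d;T) / q^{m²d}`. -/
theorem krylov_generating_tuples_count (F V : Type*) [Field F] [Fintype F]
    [AddCommGroup V] [Module F V] [FiniteDimensional F V]
    (m d : ℕ) (hm : 0 < m) (hd : 0 < d) (hdim : Module.finrank F V = m * d)
    (T : V →ₗ[F] V) :
    Set.ncard {α : Fin m → V | Submodule.span F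
        (Set.range fun p : Fin d × Fin m => (T ^ (p.1 : ℕ)) (α p.2)) = ⊤} =
      (∏ i ∈ Finset.range m, (Fintype.card F ^ m - Fintype.card F ^ i)) *
        splitCount T m d ∧
    (Set.ncard {α : Fin m → V | Submodule.span F
        (Set.range fun p : Fin d × Fin m => (T ^ (p.1 : ℕ)) (α p.2)) = ⊤} : ℚ) /
      (Nat.card (Fin m → V) : ℚ) =
      ((∏ i ∈ Finset.range m, (Fintype.card F ^ m - Fintype.card F ^ i)) *
        splitCount T m d : ℚ) / (Fintype.card F : ℚ) ^ (m ^ 2 * d) := by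
  have : Finite V := Module.finite_of_finite F
  have count : {α : Fin m → V | span F (Set.range fun p : Fin d × Fin m =>
      (T ^ (p.1 : ℕ)) (α p.2)) = ⊤}.ncard =
      (∏ i ∈ Finset.range m, (Fintype.card F ^ m - Fintype.card F ^ i)) * splitCount T m d := by
    simp only [← isSplittingSubspace_span_range_iff hdim T hd]
    exact ncard_preimage_eq_mul_ncard (f := fun α : Fin m → V => span F (Set.range α))
      (Set.toFinite _) (fun _ _ => Set.toFinite _) fun W (hW : IsSplittingSubspace T m d W) =>
        ncard_setOf_span_range_eq W hW.1
  have card_tuples : Nat.card (Fin m → V) = Fintype.card F ^ (m ^ 2 * d) := by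
    rw [natCard_eq_pow_finrank (K := F), finrank_pi_fintype, Nat.card_eq_fintype_card]
    simp [hdim, sq, mul_assoc]
  refine ⟨count, ?_⟩
  rw [count, card_tuples, Nat.cast_mul, Nat.cast_pow]
end
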